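/- arXiv:1408.1885 — 6 statements merged into one kernel-verified Lean document; each statement's English description precedes it below -/
import Mathlib

section
/- Let F : ℝ → ℝ be C², ε > 0, and let u : [0,∞) × ℝ → ℝ be a bounded C³ classical solution of ∂_t u + ∂_x(F(u)) = ε ∂_{xx} u such that, for each t ≥ 0, the functions x ↦ ∂_x u(t,x) and x ↦ ∂_{xx} u(t,x) are integrable on ℝ and tend to 0 as |x| → ∞. Then the spatial total variation is nonincreasing in time: for all 0 ≤ s ≤ t, ∫_ℝ |∂_x u(t,x)| dx ≤ ∫_ℝ |∂_x u(s,x)| dx. In particular ∫_ℝ |∂_x u(t,x)| dx ≤ ∫_ℝ |∂_x u(0,x)| dx for all t ≥ 0 (Vol'pert's BV–estimate for the viscosity method). -/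
open MeasureTheory Filter Set

/-!
The spatial increment `w(t,x) = u(t,x+h) - u(t,x)` solves `∂ₜ w + ∂ₓ g = ε ∂ₓₓ w` with
`g = F(u(t,x+h)) - F(u(t,x))`, and `|g| ≤ L |w|` because `F` is Lipschitz on the bounded range of
`u`. The core is the `L¹` contraction `∫ |w(t)| ≤ ∫ |w(s)|` (`IsLinSol.contraction`). Working with
`w` instead of `∂ₓ u` matters: `w` is bounded uniformly in space and time, whereas the hypotheses
on `∂ₓ u` are not uniform in time.

For the contraction, the equation is tested against `η'(w) φ` with `η(w) = √(w² + δ²)` and the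
cutoff `φ(x) = (1 - x²/R²)²` on `[-R, R]`. Two integrations by parts and Young's inequality, which
lets the viscous term absorb the flux up to `O(δ)`, give as `δ → 0`
`∫ |w(t)| φ ≤ ∫ |w(s)| φ + (4L/R + 8ε/R²) B (t - s)` whenever `∫_{-R}^{R} |w(τ)| ≤ B` for
`τ ∈ [s,t]` (`IsLinSol.localised_estimate`). Since `w` is bounded, `B = O(R)` is allowed, so the
`L¹` norm of `w(τ)` is bounded uniformly in `τ ∈ [s,t]`. Now `B` may be taken independent of `R`,
and `R → ∞` gives the contraction.

Finally `∫ |w(s)| ≤ h ∫ |∂ₓ u(s)|` (`integral_abs_diff_le`); dividing by `h` and letting `h → 0` in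
`∫_{-r}^{r} |w(t)| ≤ h ∫ |∂ₓ u(s)|`, then `r → ∞`, yields the estimate.
-/

/-! ### Regularised absolute value and cutoff -/

/-- `√(w² + δ²)`, a smooth convex regularisation of `|w|`. -/
noncomputable def regAbs (δ w : ℝ) : ℝ := Real.sqrt (w ^ 2 + δ ^ 2)

/-- The cutoff `(1 - x²/R²)²`, meant to be used on `[-R, R]` only: it vanishes to second order at
`±R`, so integrating by parts twice on `[-R, R]` leaves no boundary terms. -/
noncomputable def cutoff (R x : ℝ) : ℝ := (1 - x ^ 2 / R ^ 2) ^ 2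

lemma regAbs_sq (δ w : ℝ) : regAbs δ w ^ 2 = w ^ 2 + δ ^ 2 := Real.sq_sqrt (by positivity)

lemma regAbs_pos {δ : ℝ} (hδ : 0 < δ) (w : ℝ) : 0 < regAbs δ w :=
  Real.sqrt_pos.2 (by positivity)

lemma abs_le_regAbs (δ w : ℝ) : |w| ≤ regAbs δ w :=
  Real.abs_le_sqrt (by nlinarith)

lemma le_regAbs (δ w : ℝ) : δ ≤ regAbs δ w :=
  Real.le_sqrt_of_sq_le (by nlinarith [sq_nonneg w])

lemma regAbs_le {δ : ℝ} (hδ : 0 < δ) (w : ℝ) : regAbs δ w ≤ |w| + δ :=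
  Real.sqrt_le_iff.2 ⟨by positivity, by nlinarith [sq_abs w, abs_nonneg w]⟩

lemma hasDerivAt_regAbs {δ : ℝ} (hδ : 0 < δ) (w : ℝ) :
    HasDerivAt (regAbs δ) (w / regAbs δ w) w := by
  have h : HasDerivAt (fun w : ℝ => w ^ 2 + δ ^ 2) (2 * w) w := by
    simpa using (hasDerivAt_pow 2 w).add_const (δ ^ 2)
  refine (h.sqrt (by positivity)).congr_deriv ?_
  rw [regAbs]; field_simp

lemma hasDerivAt_div_regAbs {δ : ℝ} (hδ : 0 < δ) (w : ℝ) :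
    HasDerivAt (fun w => w / regAbs δ w) (δ ^ 2 / regAbs δ w ^ 3) w := by
  have hq := regAbs_pos hδ w
  refine ((hasDerivAt_id w).div (hasDerivAt_regAbs hδ w) hq.ne').congr_deriv ?_
  have := regAbs_sq δ w
  simp only [id]
  field_simp
  linarith

lemma continuous_regAbs (δ : ℝ) : Continuous (regAbs δ) := by unfold regAbs; fun_prop

lemma continuous_cutoff (R : ℝ) : Continuous (cutoff R) := by unfold cutoff; fun_prop

lemma hasDerivAt_cutoff (R x : ℝ) :
    HasDerivAt (cutoff R) (-4 * x / R ^ 2 * (1 - x ^ 2 / R ^ 2)) x := by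
  have h : HasDerivAt (fun x : ℝ => 1 - x ^ 2 / R ^ 2) (-(2 * x / R ^ 2)) x := by
    simpa using ((hasDerivAt_pow 2 x).div_const (R ^ 2)).const_sub 1
  refine (h.pow 2).congr_deriv ?_
  push_cast; ring

lemma hasDerivAt_deriv_cutoff (R x : ℝ) :
    HasDerivAt (fun x => -4 * x / R ^ 2 * (1 - x ^ 2 / R ^ 2))
      (-4 / R ^ 2 * (1 - 3 * (x ^ 2 / R ^ 2))) x := by
  have h : HasDerivAt (fun x : ℝ => 1 - x ^ 2 / R ^ 2) (-(2 * x / R ^ 2)) x := by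
    simpa using ((hasDerivAt_pow 2 x).div_const (R ^ 2)).const_sub 1
  have h2 : HasDerivAt (fun x : ℝ => -4 * x / R ^ 2) (-4 / R ^ 2) x := by
    simpa using ((hasDerivAt_id x).const_mul (-4)).div_const (R ^ 2)
  refine (h2.mul h).congr_deriv ?_
  ring

lemma sq_div_sq_le_one {R x : ℝ} (hR : 0 < R) (hx : x ∈ Icc (-R) R) : x ^ 2 / R ^ 2 ≤ 1 := by
  rw [div_le_one (by positivity)]
  exact sq_le_sq' hx.1 hx.2

lemma cutoff_nonneg (R x : ℝ) : 0 ≤ cutoff R x := sq_nonneg _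

lemma cutoff_le_one {R x : ℝ} (hR : 0 < R) (hx : x ∈ Icc (-R) R) : cutoff R x ≤ 1 := by
  have h1 := sq_div_sq_le_one hR hx
  have h2 : 0 ≤ x ^ 2 / R ^ 2 := by positivity
  unfold cutoff; nlinarith

lemma abs_deriv_cutoff_le {R x : ℝ} (hR : 0 < R) (hx : x ∈ Icc (-R) R) :
    |-4 * x / R ^ 2 * (1 - x ^ 2 / R ^ 2)| ≤ 4 / R := by
  have h1 := sq_div_sq_le_one hR hx
  have h2 : 0 ≤ x ^ 2 / R ^ 2 := by positivity
  have h3 : |x| ≤ R := abs_le.2 hx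
  rw [abs_mul]
  have h4 : |1 - x ^ 2 / R ^ 2| ≤ 1 := abs_le.2 ⟨by linarith, by linarith⟩
  have h5 : |-4 * x / R ^ 2| ≤ 4 / R := by
    rw [abs_div, abs_mul, abs_of_pos (show 0 < R ^ 2 by positivity), div_le_div_iff₀ (by positivity) hR]
    norm_num
    nlinarith
  calc _ ≤ (4 / R) * 1 := mul_le_mul h5 h4 (abs_nonneg _) (by positivity)
    _ = _ := mul_one _

lemma abs_deriv2_cutoff_le {R x : ℝ} (hR : 0 < R) (hx : x ∈ Icc (-R) R) :
    |-4 / R ^ 2 * (1 - 3 * (x ^ 2 / R ^ 2))| ≤ 8 / R ^ 2 := by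
  have h1 := sq_div_sq_le_one hR hx
  have h2 : 0 ≤ x ^ 2 / R ^ 2 := by positivity
  have h4 : |1 - 3 * (x ^ 2 / R ^ 2)| ≤ 2 := abs_le.2 ⟨by linarith, by linarith⟩
  rw [abs_mul, abs_div, abs_of_pos (show 0 < R ^ 2 by positivity)]
  norm_num
  calc 4 / R ^ 2 * |1 - 3 * (x ^ 2 / R ^ 2)| ≤ 4 / R ^ 2 * 2 := by gcongr
    _ = _ := by ring

/-! ### The entropy inequality at a fixed time -/

/-- Pointwise algebra behind the dissipation estimate: the convexity of the regularised absolute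
value absorbs the flux term up to `O(δ)`. -/
lemma young_bound {ε L δ w p g : ℝ} (hε : 0 < ε) (hδ : 0 < δ) (hg : |g| ≤ L * |w|) :
    δ ^ 2 / regAbs δ w ^ 3 * (p * g - ε * p ^ 2) ≤ L ^ 2 * δ / (4 * ε) := by
  have hq := regAbs_pos hδ w
  have h1 : p * g - ε * p ^ 2 ≤ g ^ 2 / (4 * ε) := by
    rw [le_div_iff₀ (by positivity)]
    nlinarith [sq_nonneg (2 * ε * p - g)]
  have h2 : g ^ 2 ≤ L ^ 2 * w ^ 2 := by
    rw [← sq_abs g, ← sq_abs w, ← mul_pow]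
    exact pow_le_pow_left₀ (abs_nonneg _) hg 2
  have h3 : δ ^ 2 / regAbs δ w ^ 3 * w ^ 2 ≤ δ := by
    rw [div_mul_eq_mul_div, div_le_iff₀ (by positivity)]
    have hw : w ^ 2 ≤ regAbs δ w ^ 2 := by rw [regAbs_sq]; nlinarith
    calc δ ^ 2 * w ^ 2 = δ * (δ * w ^ 2) := by ring
      _ ≤ δ * (regAbs δ w * regAbs δ w ^ 2) := by
        gcongr; exact le_regAbs δ w
      _ = _ := by ring
  calc δ ^ 2 / regAbs δ w ^ 3 * (p * g - ε * p ^ 2)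
      ≤ δ ^ 2 / regAbs δ w ^ 3 * (L ^ 2 * w ^ 2 / (4 * ε)) := by
        gcongr; exact h1.trans (by gcongr)
    _ = L ^ 2 / (4 * ε) * (δ ^ 2 / regAbs δ w ^ 3 * w ^ 2) := by ring
    _ ≤ L ^ 2 / (4 * ε) * δ := by gcongr
    _ = _ := by ring

/-- Fixed-time entropy inequality: the right-hand side `ε w'' - g'` of the equation, tested against
`η'(w) φ` with `η` the regularised absolute value and `φ` the cutoff. -/
lemma spatial_estimate {ε L δ R : ℝ} (hε : 0 < ε) (hδ : 0 < δ) (hR : 0 < R) (hL : 0 ≤ L)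
    {w wx wxx g gx : ℝ → ℝ}
    (hw : ∀ x, HasDerivAt w (wx x) x) (hwx : ∀ x, HasDerivAt wx (wxx x) x)
    (hg : ∀ x, HasDerivAt g (gx x) x) (hwxx : Continuous wxx) (hgx : Continuous gx)
    (hgw : ∀ x, |g x| ≤ L * |w x|) :
    ∫ x in (-R)..R, w x / regAbs δ (w x) * (ε * wxx x - gx x) * cutoff R x ≤
      2 * R * (L ^ 2 * δ / (4 * ε) + 8 * ε / R ^ 2 * δ) +
        (4 * L / R + 8 * ε / R ^ 2) * ∫ x in (-R)..R, |w x| := by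
  have cw : Continuous w := continuous_iff_continuousAt.2 fun x => (hw x).continuousAt
  have cwx : Continuous wx := continuous_iff_continuousAt.2 fun x => (hwx x).continuousAt
  have cg : Continuous g := continuous_iff_continuousAt.2 fun x => (hg x).continuousAt
  have cq : Continuous fun x => regAbs δ (w x) := (continuous_regAbs δ).comp cw
  have hq : ∀ x, regAbs δ (w x) ≠ 0 := fun x => (regAbs_pos hδ _).ne'
  have cφ := continuous_cutoff R
  -- `H` collects all the boundary terms of the integrations by parts.
  set H : ℝ → ℝ := fun x => w x / regAbs δ (w x) * cutoff R x * (ε * wx x - g x) -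
    ε * (regAbs δ (w x) * (-4 * x / R ^ 2 * (1 - x ^ 2 / R ^ 2))) with hH
  set H' : ℝ → ℝ := fun x =>
    w x / regAbs δ (w x) * (ε * wxx x - gx x) * cutoff R x
    - (δ ^ 2 / regAbs δ (w x) ^ 3 * (wx x * g x - ε * wx x ^ 2) * cutoff R x
      + w x / regAbs δ (w x) * g x * (-4 * x / R ^ 2 * (1 - x ^ 2 / R ^ 2))
      + ε * regAbs δ (w x) * (-4 / R ^ 2 * (1 - 3 * (x ^ 2 / R ^ 2)))) with hH'
  have hHd : ∀ x, HasDerivAt H (H' x) x := by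
    intro x
    have d1 := (hasDerivAt_div_regAbs hδ (w x)).comp x (hw x)
    have d2 := (hasDerivAt_regAbs hδ (w x)).comp x (hw x)
    have d3 := (d1.mul (hasDerivAt_cutoff R x)).mul (((hwx x).const_mul ε).sub (hg x))
    have d4 := (d2.mul (hasDerivAt_deriv_cutoff R x)).const_mul ε
    refine (d3.sub d4).congr_deriv ?_
    simp only [hH', Function.comp_apply, Pi.mul_apply, Pi.sub_apply]
    ring
  have cH' : Continuous H' := by
    simp only [hH']
    fun_prop (disch := first | exact hq | (intro x; exact pow_ne_zero _ (hq x)) | assumption)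
  have hint : ∫ x in (-R)..R, H' x = 0 := by
    rw [intervalIntegral.integral_eq_sub_of_hasDerivAt (fun x _ => hHd x)
      (cH'.intervalIntegrable _ _)]
    have : R ^ 2 / R ^ 2 = 1 := div_self (by positivity)
    simp [hH, cutoff, this]
  have cA : Continuous fun x => w x / regAbs δ (w x) * (ε * wxx x - gx x) * cutoff R x := by
    fun_prop (disch := first | exact hq | assumption)
  have hle : ∫ x in (-R)..R, w x / regAbs δ (w x) * (ε * wxx x - gx x) * cutoff R x ≤
      ∫ x in (-R)..R, (H' x + ((L ^ 2 * δ / (4 * ε) + 8 * ε / R ^ 2 * δ) +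
        (4 * L / R + 8 * ε / R ^ 2) * |w x|)) := by
    apply intervalIntegral.integral_mono_on (by linarith) (cA.intervalIntegrable _ _)
      (Continuous.intervalIntegrable (by fun_prop) _ _)
    intro x hx
    have b1 : δ ^ 2 / regAbs δ (w x) ^ 3 * (wx x * g x - ε * wx x ^ 2) * cutoff R x
        ≤ L ^ 2 * δ / (4 * ε) := by
      calc _ ≤ L ^ 2 * δ / (4 * ε) * cutoff R x :=
            mul_le_mul_of_nonneg_right (young_bound hε hδ (hgw x)) (cutoff_nonneg _ _)
        _ ≤ L ^ 2 * δ / (4 * ε) * 1 := by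
            gcongr; exact cutoff_le_one hR hx
        _ = _ := mul_one _
    have b2 : w x / regAbs δ (w x) * g x * (-4 * x / R ^ 2 * (1 - x ^ 2 / R ^ 2))
        ≤ 4 * L / R * |w x| := by
      refine (le_abs_self _).trans ?_
      rw [abs_mul, abs_mul]
      have e1 : |w x / regAbs δ (w x)| ≤ 1 := by
        rw [abs_div, abs_of_pos (regAbs_pos hδ _), div_le_one (regAbs_pos hδ _)]
        exact abs_le_regAbs δ _
      calc _ ≤ 1 * (L * |w x|) * (4 / R) := by
            gcongr
            · exact hgw x
            · exact abs_deriv_cutoff_le hR hx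
        _ = _ := by ring
    have b3 : ε * regAbs δ (w x) * (-4 / R ^ 2 * (1 - 3 * (x ^ 2 / R ^ 2)))
        ≤ ε * (|w x| + δ) * (8 / R ^ 2) := by
      refine (le_abs_self _).trans ?_
      rw [abs_mul, abs_of_pos (mul_pos hε (regAbs_pos hδ _))]
      gcongr
      · exact regAbs_le hδ _
      · exact abs_deriv2_cutoff_le hR hx
    have b4 : ε * (|w x| + δ) * (8 / R ^ 2) =
      8 * ε / R ^ 2 * δ + 8 * ε / R ^ 2 * |w x| := by ring
    simp only [hH']
    linarith
  refine hle.trans (le_of_eq ?_)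
  rw [intervalIntegral.integral_add (cH'.intervalIntegrable _ _)
    (Continuous.intervalIntegrable (by fun_prop) _ _), hint,
    intervalIntegral.integral_add (by simp) (Continuous.intervalIntegrable (by fun_prop) _ _),
    intervalIntegral.integral_const_mul, intervalIntegral.integral_const]
  simp only [smul_eq_mul]
  ring

/-! ### Evolution in time and the `L¹` contraction -/

/-- The data of a classical solution of `∂ₜ w + ∂ₓ g = ε ∂ₓₓ w` for `t ≥ 0`, with a flux dominated
by `L |w|` and `|w| ≤ K`. The derivatives `wt`, `wx`, `wxx`, `gx` are carried as explicit
functions. -/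
structure IsLinSol (ε L K : ℝ) (w wt wx wxx g gx : ℝ → ℝ → ℝ) : Prop where
  cont : Continuous fun p : ℝ × ℝ => w p.1 p.2
  cont_t : Continuous fun p : ℝ × ℝ => wt p.1 p.2
  deriv_t : ∀ t x, HasDerivAt (fun s => w s x) (wt t x) t
  deriv_x : ∀ t x, HasDerivAt (w t) (wx t x) x
  deriv_xx : ∀ t x, HasDerivAt (wx t) (wxx t x) x
  deriv_g : ∀ t x, HasDerivAt (g t) (gx t x) x
  cont_xx : ∀ t, Continuous (wxx t)
  cont_gx : ∀ t, Continuous (gx t)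
  flux : ∀ t x, 0 ≤ t → |g t x| ≤ L * |w t x|
  bdd : ∀ t x, 0 ≤ t → |w t x| ≤ K
  eqn : ∀ t x, 0 ≤ t → wt t x = ε * wxx t x - gx t x

lemma hasDerivAt_integral_of_continuous {f f' : ℝ → ℝ → ℝ} (a b : ℝ)
    (hf : Continuous fun p : ℝ × ℝ => f p.1 p.2) (hf' : Continuous fun p : ℝ × ℝ => f' p.1 p.2)
    (hd : ∀ t x, HasDerivAt (fun s => f s x) (f' t x) t) (t : ℝ) :
    HasDerivAt (fun s => ∫ x in a..b, f s x) (∫ x in a..b, f' t x) t := by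
  obtain ⟨C, hC⟩ := ((isCompact_Icc (a := t - 1) (b := t + 1)).prod
    (isCompact_uIcc (a := a) (b := b))).exists_bound_of_continuousOn hf'.continuousOn
  have cf : ∀ s, Continuous (f s) := fun s => hf.comp (by fun_prop : Continuous fun x => (s, x))
  have cf' : ∀ s, Continuous (f' s) := fun s => hf'.comp (by fun_prop : Continuous fun x => (s, x))
  refine (intervalIntegral.hasDerivAt_integral_of_dominated_loc_of_deriv_le (bound := fun _ => C)
    (Icc_mem_nhds (by linarith : t - 1 < t) (by linarith : t < t + 1))
    (Eventually.of_forall fun s => (cf s).aestronglyMeasurable) ((cf t).intervalIntegrable _ _)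
    (cf' t).aestronglyMeasurable ?_ (by simp) ?_).2
  · exact Eventually.of_forall fun x hx s hs => hC (s, x) ⟨hs, uIoc_subset_uIcc hx⟩
  · exact Eventually.of_forall fun x _ s _ => hd s x

/-- Localised Kato inequality, integrated in time. The `L¹` bound `B` on `[-R, R]` controls the error
caused by the derivatives of the cutoff. -/
lemma IsLinSol.localised_estimate {ε L K R B s t : ℝ} {w wt wx wxx g gx : ℝ → ℝ → ℝ}
    (h : IsLinSol ε L K w wt wx wxx g gx) (hε : 0 < ε) (hL : 0 ≤ L) (hR : 0 < R) (hs : 0 ≤ s)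
    (hst : s ≤ t) (hB : ∀ τ ∈ Icc s t, ∫ x in (-R)..R, |w τ x| ≤ B) :
    ∫ x in (-R)..R, |w t x| * cutoff R x ≤
      (∫ x in (-R)..R, |w s x| * cutoff R x) + (4 * L / R + 8 * ε / R ^ 2) * B * (t - s) := by
  have cφ := continuous_cutoff R
  have cw : ∀ s, Continuous (w s) := fun s => h.cont.comp (by fun_prop : Continuous fun x => (s, x))
  have key : ∀ δ : ℝ, 0 < δ → ∫ x in (-R)..R, |w t x| * cutoff R x ≤
      (∫ x in (-R)..R, |w s x| * cutoff R x) + 2 * R * δ +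
      (2 * R * (L ^ 2 * δ / (4 * ε) + 8 * ε / R ^ 2 * δ) +
        (4 * L / R + 8 * ε / R ^ 2) * B) * (t - s) := by
    intro δ hδ
    have cr := continuous_regAbs δ
    have cq := cr.comp h.cont
    have cwr : ∀ s, Continuous fun x => regAbs δ (w s x) := fun s => cr.comp (cw s)
    have hq : ∀ p : ℝ × ℝ, regAbs δ (w p.1 p.2) ≠ 0 := fun p => (regAbs_pos hδ _).ne'
    have hd : ∀ τ, HasDerivAt (fun τ => ∫ x in (-R)..R, regAbs δ (w τ x) * cutoff R x)
        (∫ x in (-R)..R, w τ x / regAbs δ (w τ x) * wt τ x * cutoff R x) τ := by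
      refine hasDerivAt_integral_of_continuous (f := fun τ x => regAbs δ (w τ x) * cutoff R x)
        (f' := fun τ x => w τ x / regAbs δ (w τ x) * wt τ x * cutoff R x) _ _ ?_ ?_ ?_
      · exact cq.mul (cφ.comp continuous_snd)
      · exact ((h.cont.div cq hq).mul h.cont_t).mul (cφ.comp continuous_snd)
      · intro τ x
        exact ((hasDerivAt_regAbs hδ _).comp τ (h.deriv_t τ x)).mul_const _
    have hbound := Convex.image_sub_le_mul_sub_of_deriv_le (convex_Icc s t)
      (f := fun τ => ∫ x in (-R)..R, regAbs δ (w τ x) * cutoff R x)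
      (C := 2 * R * (L ^ 2 * δ / (4 * ε) + 8 * ε / R ^ 2 * δ) + (4 * L / R + 8 * ε / R ^ 2) * B)
      (fun τ _ => (hd τ).continuousAt.continuousWithinAt)
      (fun τ _ => (hd τ).differentiableAt.differentiableWithinAt)
      (by
        intro τ hτ
        have hτ' := interior_subset hτ
        have h0 : 0 ≤ τ := hs.trans hτ'.1
        rw [(hd τ).deriv]
        have hsp := spatial_estimate hε hδ hR hL (h.deriv_x τ) (h.deriv_xx τ) (h.deriv_g τ)
          (h.cont_xx τ) (h.cont_gx τ) (fun x => h.flux τ x h0)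
        simp only [h.eqn τ _ h0]
        refine hsp.trans ?_
        gcongr
        exact hB τ hτ')
      s (left_mem_Icc.2 hst) t (right_mem_Icc.2 hst) hst
    have h1 : ∫ x in (-R)..R, |w t x| * cutoff R x ≤
        ∫ x in (-R)..R, regAbs δ (w t x) * cutoff R x := by
      apply intervalIntegral.integral_mono_on (by linarith)
        (((cw t).abs.mul cφ).intervalIntegrable _ _) (((cwr t).mul cφ).intervalIntegrable _ _)
      intro x _
      exact mul_le_mul_of_nonneg_right (abs_le_regAbs δ _) (cutoff_nonneg _ _)
    have h2 : ∫ x in (-R)..R, regAbs δ (w s x) * cutoff R x ≤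
        (∫ x in (-R)..R, |w s x| * cutoff R x) + 2 * R * δ := by
      have cA : Continuous fun x => |w s x| * cutoff R x := (cw s).abs.mul cφ
      have : (∫ x in (-R)..R, |w s x| * cutoff R x) + 2 * R * δ =
          ∫ x in (-R)..R, (|w s x| * cutoff R x + δ) := by
        rw [intervalIntegral.integral_add (cA.intervalIntegrable _ _) (by simp),
          intervalIntegral.integral_const, smul_eq_mul]
        ring
      rw [this]
      apply intervalIntegral.integral_mono_on (by linarith)
        (((cwr s).mul cφ).intervalIntegrable _ _)
        ((cA.add continuous_const).intervalIntegrable _ _)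
      intro x hx
      simp only [Pi.mul_apply, Pi.add_apply]
      have e1 := mul_le_mul_of_nonneg_right (regAbs_le hδ (w s x)) (cutoff_nonneg R x)
      have e2 := mul_le_mul_of_nonneg_left (cutoff_le_one hR hx) hδ.le
      linarith
    linarith
  -- Let `δ → 0`.
  have hlim : Tendsto (fun δ : ℝ => (∫ x in (-R)..R, |w s x| * cutoff R x) + 2 * R * δ +
      (2 * R * (L ^ 2 * δ / (4 * ε) + 8 * ε / R ^ 2 * δ) +
        (4 * L / R + 8 * ε / R ^ 2) * B) * (t - s)) (nhdsWithin 0 (Ioi 0))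
      (nhds ((∫ x in (-R)..R, |w s x| * cutoff R x) +
        (4 * L / R + 8 * ε / R ^ 2) * B * (t - s))) := by
    refine Tendsto.mono_left (Continuous.tendsto' (by fun_prop) _ _ ?_) nhdsWithin_le_nhds
    ring
  exact ge_of_tendsto hlim (by filter_upwards [self_mem_nhdsWithin] with δ hδ using key δ hδ)

lemma mul_integral_le_cutoff {f : ℝ → ℝ} (hf : Continuous f) (h0 : ∀ x, 0 ≤ f x) {r R : ℝ}
    (hr : 0 < r) (hrR : r ≤ R) :
    (1 - r ^ 2 / R ^ 2) ^ 2 * ∫ x in (-r)..r, f x ≤ ∫ x in (-R)..R, f x * cutoff R x := by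
  have hR : 0 < R := hr.trans_le hrR
  have cφ := continuous_cutoff R
  calc (1 - r ^ 2 / R ^ 2) ^ 2 * ∫ x in (-r)..r, f x
      = ∫ x in (-r)..r, (1 - r ^ 2 / R ^ 2) ^ 2 * f x :=
        (intervalIntegral.integral_const_mul _ _).symm
    _ ≤ ∫ x in (-r)..r, f x * cutoff R x := by
        apply intervalIntegral.integral_mono_on (by linarith)
          ((continuous_const.mul hf).intervalIntegrable _ _)
          ((hf.mul cφ).intervalIntegrable _ _)
        intro x hx
        rw [mul_comm]
        refine mul_le_mul_of_nonneg_left ?_ (h0 x)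
        have e1 : x ^ 2 / R ^ 2 ≤ r ^ 2 / R ^ 2 := by
          gcongr ?_ / _
          exact sq_le_sq' hx.1 hx.2
        have e2 : r ^ 2 / R ^ 2 ≤ 1 := sq_div_sq_le_one hR ⟨by linarith, hrR⟩
        exact pow_le_pow_left₀ (by linarith) (by linarith) 2
    _ ≤ _ := by
        apply intervalIntegral.integral_mono_interval (by linarith) (by linarith) hrR
        · exact Eventually.of_forall fun x => mul_nonneg (h0 x) (cutoff_nonneg _ _)
        · exact (hf.mul cφ).intervalIntegrable _ _

/-- `L¹` contraction. The crude bound `|w| ≤ K` makes the cutoff error `O(1)`, which bounds the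
`L¹` norm uniformly on `[s, t]`; with this bound the cutoff error becomes `O(1/R)`. -/
lemma IsLinSol.contraction {ε L K N s t : ℝ} {w wt wx wxx g gx : ℝ → ℝ → ℝ}
    (h : IsLinSol ε L K w wt wx wxx g gx) (hε : 0 < ε) (hL : 0 ≤ L) (hs : 0 ≤ s)
    (hst : s ≤ t) (hN : ∀ R : ℝ, 0 < R → ∫ x in (-R)..R, |w s x| ≤ N) {r : ℝ} (hr : 0 < r) :
    ∫ x in (-r)..r, |w t x| ≤ N := by
  have cw : ∀ s, Continuous (w s) := fun s => h.cont.comp (by fun_prop : Continuous fun x => (s, x))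
  have hK : 0 ≤ K := (abs_nonneg _).trans (h.bdd 0 0 le_rfl)
  have hN' : ∀ R : ℝ, 0 < R → ∫ x in (-R)..R, |w s x| * cutoff R x ≤ N := by
    intro R hR
    refine le_trans ?_ (hN R hR)
    apply intervalIntegral.integral_mono_on (by linarith)
      (((cw s).abs.mul (continuous_cutoff R)).intervalIntegrable _ _)
      ((cw s).abs.intervalIntegrable _ _)
    intro x hx
    exact mul_le_of_le_one_right (abs_nonneg _) (cutoff_le_one hR hx)
  have crude : ∀ R : ℝ, 0 < R → ∀ τ, 0 ≤ τ → ∫ x in (-R)..R, |w τ x| ≤ 2 * R * K := by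
    intro R hR τ hτ
    have := intervalIntegral.integral_mono_on (by linarith : -R ≤ R)
      ((cw τ).abs.intervalIntegrable _ _) (g := fun _ => K) (μ := volume) (by simp)
      (fun x _ => h.bdd τ x hτ)
    rw [intervalIntegral.integral_const, smul_eq_mul] at this
    linarith
  -- The cutoff of radius `2R` is at least `9/16` on `[-R, R]`, whence the factor `2`.
  set A : ℝ := 2 * (N + (8 * L * K + 16 * ε * K) * (t - s)) with hA
  have uniform : ∀ R : ℝ, 1 ≤ R → ∀ τ ∈ Icc s t, ∫ x in (-R)..R, |w τ x| ≤ A := by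
    intro R hR τ hτ
    have hR2 : 0 < 2 * R := by linarith
    have e1 := h.localised_estimate hε hL hR2 hs hτ.1
      (fun σ hσ => crude (2 * R) hR2 σ (hs.trans hσ.1))
    have e2 := mul_integral_le_cutoff (cw τ).abs (fun x => abs_nonneg _)
      (by linarith : 0 < R) (by linarith : R ≤ 2 * R)
    have e3 : (1 - R ^ 2 / (2 * R) ^ 2) ^ 2 = 9 / 16 := by field_simp; norm_num
    have e4 : (4 * L / (2 * R) + 8 * ε / (2 * R) ^ 2) * (2 * (2 * R) * K) =
        8 * L * K + 8 * ε * K / R := by field_simp; ring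
    have e5 : 8 * ε * K / R ≤ 8 * ε * K := div_le_self (by positivity) hR
    have e6 : (8 * L * K + 8 * ε * K / R) * (τ - s) ≤
        (8 * L * K + 16 * ε * K) * (t - s) := by
      have : 0 ≤ ε * K := by positivity
      apply mul_le_mul _ (by linarith [hτ.2]) (by linarith [hτ.1]) (by positivity)
      linarith
    have e7 : 0 ≤ ∫ x in (-R)..R, |w τ x| :=
      intervalIntegral.integral_nonneg (by linarith) fun x _ => abs_nonneg _
    rw [e3] at e2
    rw [e4] at e1
    linarith [hN' _ hR2]
  have fin : ∀ R : ℝ, max 1 r ≤ R → (1 - r ^ 2 / R ^ 2) ^ 2 * ∫ x in (-r)..r, |w t x| ≤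
      N + (4 * L / R + 8 * ε / R ^ 2) * A * (t - s) := by
    intro R hR
    have h1 : 1 ≤ R := (le_max_left _ _).trans hR
    have h2 : r ≤ R := (le_max_right _ _).trans hR
    have hR0 : 0 < R := by linarith
    have e1 := h.localised_estimate hε hL hR0 hs hst (uniform R h1)
    have e2 := mul_integral_le_cutoff (cw t).abs (fun x => abs_nonneg _) hr h2
    linarith [hN' R hR0]
  have p2 : Tendsto (fun R : ℝ => R ^ 2) atTop atTop := tendsto_pow_atTop two_ne_zero
  have l1 : Tendsto (fun R : ℝ => (1 - r ^ 2 / R ^ 2) ^ 2 * ∫ x in (-r)..r, |w t x|) atTop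
      (nhds ((1 - 0) ^ 2 * ∫ x in (-r)..r, |w t x|)) :=
    ((tendsto_const_nhds.sub (p2.const_div_atTop _)).pow 2).mul_const _
  have l2 : Tendsto (fun R : ℝ => N + (4 * L / R + 8 * ε / R ^ 2) * A * (t - s)) atTop
      (nhds (N + (0 + 0) * A * (t - s))) :=
    ((((tendsto_id.const_div_atTop _).add (p2.const_div_atTop _)).mul_const _).mul_const _).const_add
      _
  have := le_of_tendsto_of_tendsto l1 l2 (by
    filter_upwards [eventually_ge_atTop (max 1 r)] with R hR using fin R hR)
  simpa using this

/-! ### Increments and total variation -/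

/-- The `L¹` modulus of continuity of a function with integrable derivative. -/
lemma integral_abs_diff_le {f f' : ℝ → ℝ} (hf : ∀ x, HasDerivAt f (f' x) x) (hc : Continuous f')
    (hi : Integrable f') {h : ℝ} (hh : 0 < h) {R : ℝ} (hR : 0 < R) :
    ∫ x in (-R)..R, |f (x + h) - f x| ≤ h * ∫ x, |f' x| := by
  set P : ℝ → ℝ := fun x => ∫ y in (0 : ℝ)..x, |f' y| with hP
  have ci : ∀ a b, IntervalIntegrable (fun y => |f' y|) volume a b :=
    fun a b => hc.abs.intervalIntegrable _ _
  have hPsub : ∀ a b, P b - P a = ∫ y in a..b, |f' y| := fun a b => by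
    rw [hP]; exact intervalIntegral.integral_interval_sub_left (ci _ _) (ci _ _)
  have cP : Continuous P := intervalIntegral.continuous_primitive ci 0
  have mP : Monotone P := fun a b hab => by
    have := intervalIntegral.integral_nonneg (μ := volume) hab (fun y _ => abs_nonneg (f' y))
    linarith [hPsub a b]
  have cf : Continuous f := continuous_iff_continuousAt.2 fun x => (hf x).continuousAt
  have cPi : ∀ a b, IntervalIntegrable P volume a b := fun a b => cP.intervalIntegrable _ _
  have cPh : Continuous fun x => P (x + h) := by fun_prop
  -- With `P` a primitive of `|f'|`, the increment of `f` is at most that of `P`, whose integral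
  -- telescopes.
  have s1 : ∫ x in (-R)..R, |f (x + h) - f x| ≤ ∫ x in (-R)..R, (P (x + h) - P x) := by
    apply intervalIntegral.integral_mono_on (by linarith)
      (Continuous.intervalIntegrable (by fun_prop) _ _)
      (Continuous.intervalIntegrable (by fun_prop) _ _)
    intro x _
    rw [hPsub, ← intervalIntegral.integral_eq_sub_of_hasDerivAt (fun y _ => hf y)
      (hc.intervalIntegrable _ _)]
    exact intervalIntegral.abs_integral_le_integral_abs (by linarith)
  have s2 : ∫ x in (-R)..R, (P (x + h) - P x) =
      (∫ x in R..(R + h), P x) - ∫ x in (-R)..(-R + h), P x := by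
    rw [intervalIntegral.integral_sub (cPh.intervalIntegrable _ _) (cPi _ _),
      intervalIntegral.integral_comp_add_right (fun x => P x) h,
      ← intervalIntegral.integral_add_adjacent_intervals (cPi (-R + h) R) (cPi R (R + h)),
      ← intervalIntegral.integral_add_adjacent_intervals (cPi (-R) (-R + h)) (cPi (-R + h) R)]
    ring
  have s3 : ∫ x in R..(R + h), P x ≤ h * P (R + h) := by
    have := intervalIntegral.integral_mono_on (μ := volume) (by linarith : R ≤ R + h)
      (cPi _ _) (g := fun _ => P (R + h)) (by simp) (fun x hx => mP hx.2)
    simpa using this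
  have s4 : h * P (-R) ≤ ∫ x in (-R)..(-R + h), P x := by
    have := intervalIntegral.integral_mono_on (μ := volume) (by linarith : -R ≤ -R + h)
      (f := fun _ => P (-R)) (by simp) (cPi _ _) (fun x hx => mP hx.1)
    simpa using this
  have s5 : P (R + h) - P (-R) ≤ ∫ x, |f' x| := by
    rw [hPsub, intervalIntegral.integral_of_le (by linarith)]
    exact setIntegral_le_integral hi.abs (Eventually.of_forall fun x => abs_nonneg _)
  have s6 := mul_le_mul_of_nonneg_left s5 hh.le
  linarith

/-- Recovery of the total variation from `L¹` bounds on difference quotients. -/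
lemma integral_abs_deriv_le_of_diff {f f' : ℝ → ℝ} (hf : ∀ x, HasDerivAt f (f' x) x)
    (hc : Continuous f') {V r : ℝ} (hr : 0 < r)
    (hV : ∀ h : ℝ, 0 < h → ∫ x in (-r)..r, |f (x + h) - f x| ≤ h * V) :
    ∫ x in (-r)..r, |f' x| ≤ V := by
  have cf : Continuous f := continuous_iff_continuousAt.2 fun x => (hf x).continuousAt
  obtain ⟨C, hC⟩ := (isCompact_Icc (a := -r) (b := r + 1)).exists_bound_of_continuousOn
    hc.continuousOn
  have lim : Tendsto (fun h : ℝ => ∫ x in (-r)..r, |h⁻¹ * (f (x + h) - f x)|)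
      (nhdsWithin 0 (Ioi 0)) (nhds (∫ x in (-r)..r, |f' x|)) := by
    apply intervalIntegral.tendsto_integral_filter_of_dominated_convergence (fun _ => C)
    · exact Eventually.of_forall fun h => Continuous.aestronglyMeasurable (by fun_prop)
    · filter_upwards [Ioc_mem_nhdsGT (zero_lt_one' ℝ)] with h hh
      refine Eventually.of_forall fun x hx => ?_
      rw [uIoc_of_le (by linarith)] at hx
      have := Convex.norm_image_sub_le_of_norm_hasDerivWithin_le (𝕜 := ℝ)
        (fun y _ => (hf y).hasDerivWithinAt) hC (convex_Icc _ _)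
        (x := x) (y := x + h) ⟨hx.1.le, by linarith [hx.2]⟩
        ⟨by linarith [hx.1, hh.1], by linarith [hx.2, hh.2]⟩
      rw [add_sub_cancel_left, Real.norm_eq_abs, Real.norm_eq_abs, abs_of_pos hh.1] at this
      rw [Real.norm_eq_abs, abs_abs, abs_mul, abs_inv, abs_of_pos hh.1, inv_mul_le_iff₀ hh.1]
      linarith
    · simp
    · refine Eventually.of_forall fun x _ => ?_
      have := ((hf x).tendsto_slope_zero_right).abs
      simpa using this
  refine le_of_tendsto lim ?_
  filter_upwards [self_mem_nhdsWithin] with h hh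
  have hh : 0 < h := hh
  simp only [abs_mul, abs_inv, abs_of_pos hh]
  rw [intervalIntegral.integral_const_mul, inv_mul_le_iff₀ hh]
  exact hV h hh

/-! ### Application to the conservation law -/

/-- A spatial increment of a solution of the viscous conservation law solves the linear equation:
the flux `F(u(t,x+h)) - F(u(t,x))` is dominated by the increment because `F` is Lipschitz on the
range of `u`. -/
lemma isLinSol_increment {F : ℝ → ℝ} (hF : ContDiff ℝ 2 F) {ε : ℝ} {u : ℝ → ℝ → ℝ}
    (hreg : ContDiff ℝ 3 (fun p : ℝ × ℝ => u p.1 p.2))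
    (hpde : ∀ t x : ℝ, 0 ≤ t →
      deriv (fun s => u s x) t + deriv (fun y => F (u t y)) x
        = ε * deriv (deriv (fun y => u t y)) x)
    {M L : ℝ} (hM : ∀ t x : ℝ, 0 ≤ t → |u t x| ≤ M)
    (hL : ∀ a ∈ Icc (-M) M, ∀ b ∈ Icc (-M) M, |F b - F a| ≤ L * |b - a|) (h : ℝ) :
    IsLinSol ε L (2 * M) (fun t x => u t (x + h) - u t x)
      (fun t x => deriv (fun s => u s (x + h)) t - deriv (fun s => u s x) t)
      (fun t x => deriv (u t) (x + h) - deriv (u t) x)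
      (fun t x => deriv (deriv (u t)) (x + h) - deriv (deriv (u t)) x)
      (fun t x => F (u t (x + h)) - F (u t x))
      (fun t x => deriv (fun y => F (u t y)) (x + h) - deriv (fun y => F (u t y)) x) := by
  have cu := hreg.continuous
  have hslice : ∀ t, ContDiff ℝ 3 (u t) := fun t =>
    hreg.comp (by fun_prop : ContDiff ℝ 3 fun x : ℝ => (t, x))
  have hslice_t : ∀ x, ContDiff ℝ 3 (fun s => u s x) := fun x =>
    hreg.comp (by fun_prop : ContDiff ℝ 3 fun s : ℝ => (s, x))
  have hFu : ∀ t, ContDiff ℝ 2 (fun y => F (u t y)) := fun t =>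
    hF.comp ((hslice t).of_le (by norm_num))
  have hd1 : ∀ t, ContDiff ℝ 2 (deriv (u t)) := fun t =>
    ((contDiff_succ_iff_deriv (n := 2)).1 ((hslice t).of_le (by norm_num))).2.2
  have hut : ∀ t x, HasDerivAt (fun s => u s x) (deriv (fun s => u s x) t) t := fun t x =>
    ((hslice_t x).differentiable (by norm_num) t).hasDerivAt
  have hux : ∀ t x, HasDerivAt (u t) (deriv (u t) x) x := fun t x =>
    ((hslice t).differentiable (by norm_num) x).hasDerivAt
  have huxx : ∀ t x, HasDerivAt (deriv (u t)) (deriv (deriv (u t)) x) x := fun t x =>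
    ((hd1 t).differentiable (by norm_num) x).hasDerivAt
  have hgx : ∀ t x, HasDerivAt (fun y => F (u t y)) (deriv (fun y => F (u t y)) x) x := fun t x =>
    ((hFu t).differentiable (by norm_num) x).hasDerivAt
  have cxx : ∀ t, Continuous (deriv (deriv (u t))) := fun t => (hd1 t).continuous_deriv (by norm_num)
  have cgx : ∀ t, Continuous (deriv (fun y => F (u t y))) := fun t =>
    (hFu t).continuous_deriv (by norm_num)
  have ct : Continuous fun p : ℝ × ℝ => deriv (fun s => u s p.2) p.1 := by
    have : (fun p : ℝ × ℝ => deriv (fun s => u s p.2) p.1) =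
        fun p => fderiv ℝ (fun p : ℝ × ℝ => u p.1 p.2) p (1, 0) := by
      funext p
      have h1 := (hreg.differentiable (by norm_num) p).hasFDerivAt
      have h2 : HasDerivAt (fun s : ℝ => (s, p.2)) ((1 : ℝ), (0 : ℝ)) p.1 :=
        (hasDerivAt_id p.1).prodMk (hasDerivAt_const _ _)
      exact (HasFDerivAt.comp_hasDerivAt (f := fun s : ℝ => (s, p.2)) p.1 h1 h2).deriv
    rw [this]
    exact (hreg.continuous_fderiv (by norm_num)).clm_apply continuous_const
  have csh : Continuous fun p : ℝ × ℝ => (p.1, p.2 + h) := by fun_prop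
  have mem : ∀ t x, 0 ≤ t → u t x ∈ Icc (-M) M := fun t x ht => abs_le.1 (hM t x ht)
  refine ⟨(cu.comp csh).sub cu, (ct.comp csh).sub ct, fun t x => (hut t _).sub (hut t x),
    fun t x => ((hux t _).comp_add_const x h).sub (hux t x),
    fun t x => ((huxx t _).comp_add_const x h).sub (huxx t x),
    fun t x => ((hgx t _).comp_add_const x h).sub (hgx t x),
    fun t => ((cxx t).comp (continuous_add_const h)).sub (cxx t),
    fun t => ((cgx t).comp (continuous_add_const h)).sub (cgx t),
    fun t x ht => hL _ (mem t _ ht) _ (mem t _ ht), fun t x ht => ?_, fun t x ht => ?_⟩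
  · exact (abs_sub _ _).trans (by linarith [hM t x ht, hM t (x + h) ht])
  · have h1 := hpde t x ht
    have h2 := hpde t (x + h) ht
    linarith

/-- **Vol'pert's BV–estimate for the viscosity method.**
For a bounded C³ classical solution of `∂ₜ u + ∂ₓ (F(u)) = ε ∂ₓₓ u` whose first and second
spatial derivatives are integrable and decay at spatial infinity, the spatial total variation
`∫ |∂ₓ u(t,x)| dx` is nonincreasing in time; in particular, it is dominated by its initial value. -/
theorem volpert_BV_estimate
    (F : ℝ → ℝ) (hF : ContDiff ℝ 2 F) (ε : ℝ) (hε : 0 < ε)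
    (u : ℝ → ℝ → ℝ)
    (hreg : ContDiff ℝ 3 (fun p : ℝ × ℝ => u p.1 p.2))
    (hbdd : ∃ M : ℝ, ∀ t x : ℝ, 0 ≤ t → |u t x| ≤ M)
    (hpde : ∀ t x : ℝ, 0 ≤ t →
      deriv (fun s => u s x) t + deriv (fun y => F (u t y)) x
        = ε * deriv (deriv (fun y => u t y)) x)
    (hint₁ : ∀ t : ℝ, 0 ≤ t → Integrable (fun x => deriv (fun y => u t y) x))
    (hint₂ : ∀ t : ℝ, 0 ≤ t → Integrable (fun x => deriv (deriv (fun y => u t y)) x))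
    (hdecay₁ : ∀ t : ℝ, 0 ≤ t →
      Tendsto (fun x => deriv (fun y => u t y) x) (cocompact ℝ) (nhds 0))
    (hdecay₂ : ∀ t : ℝ, 0 ≤ t →
      Tendsto (fun x => deriv (deriv (fun y => u t y)) x) (cocompact ℝ) (nhds 0)) :
    (∀ s t : ℝ, 0 ≤ s → s ≤ t →
      (∫ x : ℝ, |deriv (fun y => u t y) x|) ≤ ∫ x : ℝ, |deriv (fun y => u s y) x|) ∧
    (∀ t : ℝ, 0 ≤ t →
      (∫ x : ℝ, |deriv (fun y => u t y) x|) ≤ ∫ x : ℝ, |deriv (fun y => u 0 y) x|) := by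
  obtain ⟨M, hM⟩ := hbdd
  -- A Lipschitz constant of `F` on the range of `u`.
  obtain ⟨L, hL⟩ := (isCompact_Icc (a := -M) (b := M)).exists_bound_of_continuousOn
    (hF.continuous_deriv (by norm_num)).continuousOn
  have hM0 : 0 ≤ M := (abs_nonneg _).trans (hM 0 0 le_rfl)
  have hL0 : 0 ≤ L := (norm_nonneg _).trans (hL 0 ⟨by linarith, hM0⟩)
  have hLip : ∀ a ∈ Icc (-M) M, ∀ b ∈ Icc (-M) M, |F b - F a| ≤ L * |b - a| := fun a ha b hb =>
    Convex.norm_image_sub_le_of_norm_deriv_le (𝕜 := ℝ)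
      (fun x _ => hF.differentiable (by norm_num) x) hL (convex_Icc _ _) ha hb
  have hslice : ∀ t, ContDiff ℝ 3 (u t) := fun t =>
    hreg.comp (by fun_prop : ContDiff ℝ 3 fun x : ℝ => (t, x))
  have hux : ∀ t x, HasDerivAt (u t) (deriv (u t) x) x := fun t x =>
    ((hslice t).differentiable (by norm_num) x).hasDerivAt
  have cux : ∀ t, Continuous (deriv (u t)) := fun t => (hslice t).continuous_deriv (by norm_num)
  have main : ∀ s t : ℝ, 0 ≤ s → s ≤ t →
      (∫ x : ℝ, |deriv (fun y => u t y) x|) ≤ ∫ x : ℝ, |deriv (fun y => u s y) x| := by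
    intro s t hs hst
    have hr : ∀ r : ℝ, 0 < r → ∫ x in (-r)..r, |deriv (u t) x| ≤ ∫ x, |deriv (u s) x| := by
      intro r hr
      refine integral_abs_deriv_le_of_diff (hux t) (cux t) hr fun h hh => ?_
      exact (isLinSol_increment hF hreg hpde hM hLip h).contraction hε hL0 hs hst
        (fun R hR => integral_abs_diff_le (hux s) (cux s) (hint₁ s hs) hh hR) hr
    refine le_of_tendsto (intervalIntegral_tendsto_integral (hint₁ t (hs.trans hst)).abs
      tendsto_neg_atTop_atBot tendsto_id) ?_
    filter_upwards [eventually_gt_atTop 0] with r h0 using hr r h0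
  exact ⟨main, fun t ht => main 0 t le_rfl ht⟩
end

section
/- Let F : ℝ → ℝ be C², ε > 0, and let u : [0,∞) × ℝ → ℝ be a bounded C³ classical solution of ∂_t u + ∂_x(F(u)) = ε ∂_{xx} u. Then v := |∂_x u| satisfies the differential inequality ∂_t v + ∂_x(F'(u) v) ≤ ε ∂_{xx} v in the sense of distributions; that is, for every nonnegative test function φ ∈ C_c^∞((0,∞) × ℝ), one has ∫₀^∞ ∫_ℝ ( |∂_x u| ∂_t φ + F'(u) |∂_x u| ∂_x φ + ε |∂_x u| ∂_{xx} φ ) dx dt ≥ 0. -/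
/-!
Write `w = ∂ₓ u` and `A = F' ∘ u`. Differentiating the equation in `x` gives
`∂ₜ w + ∂ₓ(A w) = ε ∂ₓₓ w` for `t ≥ 0`. Replace `|w|` by the smooth `η = √(w² + δ²)`, `δ > 0`.
Convexity of `r ↦ √(r² + δ²)` and the equation for `w` give
`ε ∂ₓₓ η - ∂ₜ η - ∂ₓ(A η) ≥ -δ |∂ₓ A|` (`regularized_ineq`).

Multiplying by `φ ≥ 0` and moving the derivatives onto `φ`, the integrand with `η` in place of
`|w|` is bounded below by a sum of directional derivatives of compactly supported `C¹` functions,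
which integrate to zero, minus `δ φ |∂ₓ A|`. Since `| |w| - η | ≤ δ`, returning to `|w|` costs
another `δ (|∂ₜ φ| + |A ∂ₓ φ| + ε |∂ₓₓ φ|)`. So the integral is at least `-δ C` with `C` independent
of `δ`, hence nonnegative. All derivatives are handled as directional derivatives on `ℝ × ℝ`.
-/

open MeasureTheory Filter Set

namespace Volpert

/-- The derivative of `f` in the constant direction `v`; `v = (1, 0)` is `∂ₜ` and `v = (0, 1)`
is `∂ₓ`. -/
noncomputable def D (v : ℝ × ℝ) (f : ℝ × ℝ → ℝ) (p : ℝ × ℝ) : ℝ := fderiv ℝ f p v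

lemma contDiff_D {n m : WithTop ℕ∞} {f : ℝ × ℝ → ℝ} (hf : ContDiff ℝ n f) (h : m + 1 ≤ n)
    (v : ℝ × ℝ) : ContDiff ℝ m (D v f) :=
  (hf.fderiv_right h).clm_apply contDiff_const

lemma D_mul {f g : ℝ × ℝ → ℝ} (hf : ContDiff ℝ 1 f) (hg : ContDiff ℝ 1 g) (v p : ℝ × ℝ) :
    D v (fun q => f q * g q) p = D v f p * g p + f p * D v g p := by
  have h := ((hf.differentiable one_ne_zero p).hasFDerivAt.mul
    (hg.differentiable one_ne_zero p).hasFDerivAt).fderiv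
  simp only [D]
  erw [h]
  simp
  ring

lemma deriv_fst_eq {f : ℝ × ℝ → ℝ} (hf : ContDiff ℝ 1 f) (t x : ℝ) :
    deriv (fun s => f (s, x)) t = D (1, 0) f (t, x) := by
  have h1 : HasDerivAt (fun s : ℝ => (s, x)) ((1 : ℝ), (0 : ℝ)) t :=
    (hasDerivAt_id t).prodMk (hasDerivAt_const t x)
  exact ((hf.differentiable one_ne_zero (t, x)).hasFDerivAt.comp_hasDerivAt t h1).deriv

lemma deriv_snd_eq {f : ℝ × ℝ → ℝ} (hf : ContDiff ℝ 1 f) (t x : ℝ) :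
    deriv (fun y => f (t, y)) x = D (0, 1) f (t, x) := by
  have h1 : HasDerivAt (fun y : ℝ => (t, y)) ((0 : ℝ), (1 : ℝ)) x :=
    (hasDerivAt_const x t).prodMk (hasDerivAt_id x)
  exact ((hf.differentiable one_ne_zero (t, x)).hasFDerivAt.comp_hasDerivAt x h1).deriv

lemma D_comm {f : ℝ × ℝ → ℝ} (hf : ContDiff ℝ 2 f) (v w p : ℝ × ℝ) :
    D v (D w f) p = D w (D v f) p := by
  have hs : IsSymmSndFDerivAt ℝ f p := hf.contDiffAt.isSymmSndFDerivAt (by simp)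
  have hd : DifferentiableAt ℝ (fderiv ℝ f) p :=
    (hf.fderiv_right (m := 1) (by norm_num)).differentiable one_ne_zero p
  have key : ∀ a b : ℝ × ℝ, D a (D b f) p = fderiv ℝ (fderiv ℝ f) p a b := by
    intro a b
    have h := (hd.hasFDerivAt.clm_apply (hasFDerivAt_const b p)).fderiv
    simp only [D]
    erw [h]
    simp
  rw [key, key]
  exact hs v w

lemma integrable_of_compact {f : ℝ × ℝ → ℝ} (hf : Continuous f) (hc : HasCompactSupport f) :
    Integrable f := hf.integrable_of_hasCompactSupport hc

lemma hasCompactSupport_D {f : ℝ × ℝ → ℝ} (hc : HasCompactSupport f) (v : ℝ × ℝ) :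
    HasCompactSupport (D v f) := hc.fderiv_apply ℝ v

lemma integral_D {f : ℝ × ℝ → ℝ} (hf : ContDiff ℝ 1 f) (hc : HasCompactSupport f)
    (v : ℝ × ℝ) : Integrable (D v f) ∧ ∫ p, D v f p = 0 := by
  have hi : Integrable (D v f) :=
    integrable_of_compact (contDiff_D (m := 0) hf (by norm_num) v).continuous
      (hasCompactSupport_D hc v)
  refine ⟨hi, ?_⟩
  have hi' : Integrable (fun x => fderiv ℝ f x v) := hi
  have h := integral_mul_fderiv_eq_neg_fderiv_mul_of_integrable (𝕜 := ℝ) (μ := volume)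
    (f := fun _ : ℝ × ℝ => (1 : ℝ)) (g := f) (v := v)
    (by simp) (by simpa using hi')
    (by simpa using integrable_of_compact hf.continuous hc)
    (fun _ _ => by fun_prop) (fun x _ => hf.differentiable one_ne_zero x)
  simpa [D] using h

/-- The pointwise algebra behind the regularized inequality: `e` stands for `η = √(w² + δ²)`, and
`h2`, `h3`, `h4` are obtained by differentiating `h1`; `hw` is the equation for `w`. -/
lemma regularized_ineq {ε δ w wt wx wxx A Ax e et ex exx : ℝ} (hε : 0 < ε) (hδ : 0 < δ)
    (he : 0 < e) (h1 : e * e = w * w + δ * δ) (h2 : e * et = w * wt) (h3 : e * ex = w * wx)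
    (h4 : ex * ex + e * exx = wx * wx + w * wxx) (hw : wt + (Ax * w + A * wx) = ε * wxx) :
    -(δ * |Ax|) ≤ ε * exx - et - (Ax * e + A * ex) := by
  have hδe : δ ≤ e := by nlinarith [mul_self_nonneg w]
  have hxx : ex * ex ≤ wx * wx := by
    have h : (e * e) * (ex * ex) ≤ (e * e) * (wx * wx) := by
      have : (e * e) * (ex * ex) = (w * w) * (wx * wx) := by
        linear_combination (e * ex + w * wx) * h3
      rw [this, h1]
      nlinarith [mul_self_nonneg wx, mul_self_nonneg δ,
        mul_nonneg (mul_self_nonneg δ) (mul_self_nonneg wx)]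
    exact le_of_mul_le_mul_left h (mul_pos he he)
  have hid : e * (ε * exx - et - (Ax * e + A * ex)) = -(δ * δ * Ax) + ε * (wx * wx - ex * ex) := by
    linear_combination ε * h4 - h2 - A * h3 - Ax * h1 - w * hw
  have h5 : δ * δ * Ax ≤ e * (δ * |Ax|) := by
    calc δ * δ * Ax ≤ δ * δ * |Ax| := by gcongr; exact le_abs_self _
      _ ≤ e * δ * |Ax| := by gcongr
      _ = _ := by ring
  have h6 : 0 ≤ ε * (wx * wx - ex * ex) := mul_nonneg hε.le (by linarith)
  refine le_of_mul_le_mul_left (a := e) ?_ he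
  rw [hid]
  linarith

end Volpert

open Volpert in
/-- **Vol'pert's distributional inequality for `|∂ₓ u|`.**
If `u` is a bounded C³ classical solution of `∂ₜ u + ∂ₓ (F(u)) = ε ∂ₓₓ u`, then
`v := |∂ₓ u|` satisfies `∂ₜ v + ∂ₓ (F'(u) v) ≤ ε ∂ₓₓ v` in the sense of distributions:
testing against any nonnegative `φ ∈ C_c^∞((0,∞) × ℝ)` yields a nonnegative quantity. -/
theorem volpert_distributional_inequality
    (F : ℝ → ℝ) (hF : ContDiff ℝ 2 F) (ε : ℝ) (hε : 0 < ε)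
    (u : ℝ → ℝ → ℝ)
    (hreg : ContDiff ℝ 3 (fun p : ℝ × ℝ => u p.1 p.2))
    (hbdd : ∃ M : ℝ, ∀ t x : ℝ, 0 ≤ t → |u t x| ≤ M)
    (hpde : ∀ t x : ℝ, 0 ≤ t →
      deriv (fun s => u s x) t + deriv (fun y => F (u t y)) x
        = ε * deriv (deriv (fun y => u t y)) x) :
    ∀ φ : ℝ × ℝ → ℝ, ContDiff ℝ (⊤ : ℕ∞) φ → HasCompactSupport φ →
      tsupport φ ⊆ Set.Ioi (0 : ℝ) ×ˢ Set.univ → (∀ p, 0 ≤ φ p) →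
      0 ≤ ∫ t in Set.Ioi (0 : ℝ), ∫ x : ℝ,
            (|deriv (fun y => u t y) x| * deriv (fun s => φ (s, x)) t
              + deriv F (u t x) * |deriv (fun y => u t y) x| * deriv (fun y => φ (t, y)) x
              + ε * |deriv (fun y => u t y) x| * deriv (deriv (fun y => φ (t, y))) x) := by
  intro φ hφ hc hsupp hpos
  set U : ℝ × ℝ → ℝ := fun p => u p.1 p.2 with hU
  set w := D (0, 1) U with hw
  set A : ℝ × ℝ → ℝ := fun p => deriv F (U p) with hA
  have hU1 : ContDiff ℝ 1 U := hreg.of_le (by norm_num)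
  have hw2 : ContDiff ℝ 2 w := contDiff_D hreg (by norm_num) _
  have hw1 : ContDiff ℝ 1 w := hw2.of_le (by norm_num)
  have hwx1 : ContDiff ℝ 1 (D (0, 1) w) := contDiff_D hw2 (by norm_num) _
  have hF' : ContDiff ℝ 1 (deriv F) :=
    ((contDiff_succ_iff_deriv (n := 1)).1 (by simpa [one_add_one_eq_two] using hF)).2.2
  have hA1 : ContDiff ℝ 1 A := hF'.comp hU1
  have hφn : ∀ n : ℕ, ContDiff ℝ n φ := fun n => hφ.of_le (by exact_mod_cast le_top)
  have hφ2 : ContDiff ℝ 2 φ := hφn 2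
  have hφ1 : ContDiff ℝ 1 φ := hφ2.of_le (by norm_num)
  have hφx1 : ContDiff ℝ 1 (D (0, 1) φ) := contDiff_D hφ2 (by norm_num) _
  have cont_D : ∀ {f : ℝ × ℝ → ℝ}, ContDiff ℝ 1 f → ∀ v, Continuous (D v f) :=
    fun hf v => (contDiff_D (m := 0) hf (by norm_num) v).continuous
  have cφt := cont_D hφ1 (1, 0)
  have cφx := cont_D hφ1 (0, 1)
  have cφxx := cont_D hφx1 (0, 1)
  have cAx := cont_D hA1 (0, 1)
  have cA := hA1.continuous
  have cw := hw1.continuous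
  have cφ := hφ1.continuous
  have sφt := hasCompactSupport_D hc (1, 0)
  have sφx := hasCompactSupport_D hc (0, 1)
  have sφxx := hasCompactSupport_D sφx (0, 1)
  -- the equation in terms of directional derivatives
  have hux : ∀ t x, deriv (fun y => u t y) x = w (t, x) := fun t x => deriv_snd_eq hU1 t x
  have hpde' : ∀ p : ℝ × ℝ, 0 ≤ p.1 →
      D (1, 0) U p + A p * w p = ε * D (0, 1) w p := by
    rintro ⟨t, x⟩ ht
    have h := hpde t x ht
    have h2 : deriv (fun s => u s x) t = D (1, 0) U (t, x) := deriv_fst_eq hU1 t x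
    have h3 : deriv (deriv (fun y => u t y)) x = D (0, 1) w (t, x) := by
      rw [← deriv_snd_eq hw1 t x]
      congr 1
      funext y
      exact hux t y
    have h4 : deriv (fun y => F (u t y)) x = A (t, x) * w (t, x) := by
      rw [← hux t x]
      have hFd : DifferentiableAt ℝ F (u t x) := hF.differentiable (by norm_num) _
      have hud : DifferentiableAt ℝ (fun y => u t y) x :=
        (hU1.differentiable one_ne_zero (t, x)).comp x
          ((differentiableAt_const t).prodMk differentiableAt_id)
      exact (hFd.hasDerivAt.comp x hud.hasDerivAt).deriv
    rw [h2, h3, h4] at h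
    exact h
  have hweq : ∀ p : ℝ × ℝ, 0 ≤ p.1 →
      D (1, 0) w p + (D (0, 1) A p * w p + A p * D (0, 1) w p)
        = ε * D (0, 1) (D (0, 1) w) p := by
    rintro ⟨t, x⟩ ht
    have hUt1 : ContDiff ℝ 1 (D (1, 0) U) :=
      contDiff_D (n := 2) (hreg.of_le (by norm_num)) (by norm_num) _
    have hsl : (fun y => D (1, 0) U (t, y)) =
        fun y => ε * D (0, 1) w (t, y) - A (t, y) * w (t, y) := by
      funext y
      linarith [hpde' (t, y) ht]
    have h := deriv_snd_eq hUt1 t x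
    have hdx : ∀ {f : ℝ × ℝ → ℝ}, ContDiff ℝ 1 f → DifferentiableAt ℝ (fun y => f (t, y)) x :=
      fun hf => (hf.differentiable one_ne_zero (t, x)).comp x
          ((differentiableAt_const t).prodMk differentiableAt_id)
    have hAw : ContDiff ℝ 1 (fun q => A q * w q) := hA1.mul hw1
    rw [hsl, deriv_fun_sub ((hdx hwx1).const_mul ε) (hdx hAw), deriv_const_mul_field,
      deriv_snd_eq hwx1, deriv_snd_eq hAw, D_mul hA1 hw1,
      D_comm (f := U) (hreg.of_le (by norm_num)) (0, 1) (1, 0)] at h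
    linarith
  -- reduction to an integral over the plane
  set G : ℝ × ℝ → ℝ := fun p => |w p| * D (1, 0) φ p + A p * |w p| * D (0, 1) φ p
    + ε * |w p| * D (0, 1) (D (0, 1) φ) p with hG
  have cG : Continuous G := by fun_prop
  have sG : HasCompactSupport G := by
    refine (HasCompactSupport.add ?_ ?_).add ?_
    · exact sφt.mul_left
    · exact sφx.mul_left
    · exact sφxx.mul_left
  have iG := integrable_of_compact cG sG
  have hDzero : ∀ {f : ℝ × ℝ → ℝ} {p} (v : ℝ × ℝ), p ∉ tsupport f → p ∉ tsupport (D v f) := by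
    intro f p v hp h
    exact hp (tsupport_fderiv_apply_subset ℝ v h)
  have hzero : ∀ p : ℝ × ℝ, p.1 ≤ 0 → φ p = 0 ∧ D (1, 0) φ p = 0 ∧ D (0, 1) φ p = 0 ∧
      D (0, 1) (D (0, 1) φ) p = 0 := by
    intro p hp
    have h0 : p ∉ tsupport φ := fun h => absurd (hsupp h).1 (not_lt.2 hp)
    exact ⟨image_eq_zero_of_notMem_tsupport h0,
      image_eq_zero_of_notMem_tsupport (hDzero _ h0),
      image_eq_zero_of_notMem_tsupport (hDzero _ h0),
      image_eq_zero_of_notMem_tsupport (hDzero _ (hDzero _ h0))⟩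
  have hint : (∫ t in Set.Ioi (0 : ℝ), ∫ x : ℝ,
            (|deriv (fun y => u t y) x| * deriv (fun s => φ (s, x)) t
              + deriv F (u t x) * |deriv (fun y => u t y) x| * deriv (fun y => φ (t, y)) x
              + ε * |deriv (fun y => u t y) x| * deriv (deriv (fun y => φ (t, y))) x))
      = ∫ p, G p := by
    have hGe : ∀ t x, (|deriv (fun y => u t y) x| * deriv (fun s => φ (s, x)) t
              + deriv F (u t x) * |deriv (fun y => u t y) x| * deriv (fun y => φ (t, y)) x
              + ε * |deriv (fun y => u t y) x| * deriv (deriv (fun y => φ (t, y))) x)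
        = G (t, x) := by
      intro t x
      have h3 : deriv (deriv (fun y => φ (t, y))) x = D (0, 1) (D (0, 1) φ) (t, x) := by
        rw [← deriv_snd_eq hφx1 t x]
        congr 1
        funext y
        exact deriv_snd_eq hφ1 t y
      rw [hux, deriv_fst_eq hφ1, deriv_snd_eq hφ1, h3]
    simp_rw [hGe]
    rw [setIntegral_eq_integral_of_forall_compl_eq_zero]
    · rw [Measure.volume_eq_prod] at iG ⊢
      exact (integral_prod G iG).symm
    · intro t ht
      have : ∀ x, G (t, x) = 0 := fun x => by
        obtain ⟨-, h1, h2, h3⟩ := hzero (t, x) (not_lt.1 ht)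
        simp [hG, h1, h2, h3]
      simp [this]
  rw [hint]
  -- the error density, independent of `δ`
  set H : ℝ × ℝ → ℝ := fun p => φ p * |D (0, 1) A p| + |D (1, 0) φ p| + |A p| * |D (0, 1) φ p|
    + ε * |D (0, 1) (D (0, 1) φ) p| with hH
  have cH : Continuous H := by fun_prop
  have sH : HasCompactSupport H := by
    refine ((HasCompactSupport.add ?_ ?_).add ?_).add ?_
    · exact hc.mul_right
    · exact sφt.abs
    · exact sφx.abs.mul_left
    · exact sφxx.abs.mul_left
  have iH := integrable_of_compact cH sH
  have key : ∀ δ : ℝ, 0 < δ → -(δ * ∫ p, H p) ≤ ∫ p, G p := by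
    intro δ hδ
    set η : ℝ × ℝ → ℝ := fun p => Real.sqrt (w p * w p + δ * δ) with hη
    have hin : ∀ p, 0 < w p * w p + δ * δ := fun p => by
      nlinarith [mul_self_nonneg (w p), mul_pos hδ hδ]
    have hη0 : ∀ p, 0 < η p := fun p => Real.sqrt_pos.2 (hin p)
    have hηη : ∀ p, η p * η p = w p * w p + δ * δ := fun p => Real.mul_self_sqrt (hin p).le
    have hη2 : ContDiff ℝ 2 η := ((hw2.mul hw2).add contDiff_const).sqrt fun p => (hin p).ne'
    have hη1 : ContDiff ℝ 1 η := hη2.of_le (by norm_num)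
    have hηx1 : ContDiff ℝ 1 (D (0, 1) η) := contDiff_D hη2 (by norm_num) _
    have hDη : ∀ v p, η p * D v η p = w p * D v w p := by
      intro v p
      have h1 := D_mul hη1 hη1 v p
      have h2 : D v (fun q => η q * η q) p = D v (fun q => w q * w q) p := by
        simp only [hηη, D, fderiv_add_const]
      have h3 := D_mul hw1 hw1 v p
      linarith
    have hDDη : ∀ p, D (0, 1) η p * D (0, 1) η p + η p * D (0, 1) (D (0, 1) η) p
        = D (0, 1) w p * D (0, 1) w p + w p * D (0, 1) (D (0, 1) w) p := by
      intro p
      have h2 : D (0, 1) (fun q => η q * D (0, 1) η q) p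
          = D (0, 1) (fun q => w q * D (0, 1) w q) p := by
        simp only [hDη]
      rwa [D_mul hη1 hηx1, D_mul hw1 hwx1] at h2
    -- the four total derivatives produced by the integrations by parts
    have hAη : ContDiff ℝ 1 (fun q => A q * η q) := hA1.mul hη1
    obtain ⟨i1, z1⟩ := integral_D (hη1.mul hφ1) hc.mul_left (1, 0)
    obtain ⟨i2, z2⟩ := integral_D (hAη.mul hφ1) hc.mul_left (0, 1)
    obtain ⟨i3, z3⟩ := integral_D (hη1.mul hφx1) sφx.mul_left (0, 1)
    obtain ⟨i4, z4⟩ := integral_D (hηx1.mul hφ1) hc.mul_left (0, 1)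
    have hle : ∀ p, D (1, 0) (fun q => η q * φ q) p + D (0, 1) (fun q => (A q * η q) * φ q) p
        + (ε * D (0, 1) (fun q => η q * D (0, 1) φ q) p
          - ε * D (0, 1) (fun q => D (0, 1) η q * φ q) p) - δ * H p ≤ G p := by
      intro p
      rw [D_mul hη1 hφ1, D_mul hAη hφ1, D_mul hA1 hη1, D_mul hη1 hφx1, D_mul hηx1 hφ1]
      rcases le_or_gt p.1 0 with hp | hp
      · obtain ⟨h0, h1, h2, h3⟩ := hzero p hp
        simp [hG, hH, h0, h1, h2, h3]
      · have hreg := regularized_ineq hε hδ (hη0 p) (hηη p) (hDη (1, 0) p) (hDη (0, 1) p)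
          (hDDη p) (hweq p hp.le)
        have hmul := mul_le_mul_of_nonneg_left hreg (hpos p)
        have hd : |(|w p| - η p)| ≤ δ := by
          have := hηη p
          have := abs_mul_abs_self (w p)
          have := abs_nonneg (w p)
          have := hη0 p
          rw [abs_le]
          constructor <;> nlinarith
        have hb : ∀ a : ℝ, -(δ * |a|) ≤ (|w p| - η p) * a := fun a => by
          have h1 : |(|w p| - η p) * a| ≤ δ * |a| := by rw [abs_mul]; gcongr
          linarith [neg_abs_le ((|w p| - η p) * a)]
        have e1 := hb (D (1, 0) φ p)
        have e2 := hb (A p * D (0, 1) φ p)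
        have e3 := mul_le_mul_of_nonneg_left (hb (D (0, 1) (D (0, 1) φ) p)) hε.le
        rw [abs_mul] at e2
        simp only [hG, hH]
        linarith
    have hmono := integral_mono
      (((i1.add i2).add ((i3.const_mul ε).sub (i4.const_mul ε))).sub (iH.const_mul δ)) iG hle
    rw [integral_sub' ((i1.add i2).add ((i3.const_mul ε).sub (i4.const_mul ε)))
        (iH.const_mul δ), integral_add' (i1.add i2) ((i3.const_mul ε).sub (i4.const_mul ε)),
      integral_add' i1 i2, integral_sub' (i3.const_mul ε) (i4.const_mul ε),
      integral_const_mul, integral_const_mul, integral_const_mul, z1, z2, z3, z4] at hmono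
    linarith
  -- let `δ → 0`
  have ht : Tendsto (fun δ : ℝ => -(δ * ∫ p, H p)) (nhdsWithin 0 (Set.Ioi 0)) (nhds 0) := by
    have : Continuous fun δ : ℝ => -(δ * ∫ p, H p) := by fun_prop
    simpa using (this.tendsto 0).mono_left nhdsWithin_le_nhds
  exact le_of_tendsto ht (eventually_mem_nhdsWithin.mono fun δ hδ => key δ hδ)
end

section
/- Let F : ℝ → ℝ be C² and ε > 0. Let u, v : [0,∞) × ℝ → ℝ be two bounded C² classical solutions of ∂_t w + ∂_x(F(w)) = ε ∂_{xx} w such that, for each t ≥ 0, (u−v)(t,·), ∂_x(u−v)(t,·), ∂_{xx}(u−v)(t,·) belong to L¹(ℝ) and (u−v)(t,x), ∂_x(u−v)(t,x) → 0 as |x| → ∞. Then the L¹-distance is nonincreasing in time: for all t ≥ 0, ∫_ℝ |u(t,x) − v(t,x)| dx ≤ ∫_ℝ |u(0,x) − v(0,x)| dx (Kruzhkov L¹-stability for the viscosity method). -/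
open MeasureTheory Filter Set

/-!
Put `w = u - v` and `g = F(u) - F(v)`. Then `∂ₜ w = ε ∂ₓₓ w - ∂ₓ g`, and since `u`, `v` take values
in a compact interval, on which `F` is Lipschitz, `|g| ≤ L |w|`.

Let `φ` be a cutoff equal to `1` on `[-R, R]` and vanishing outside `[-2R, 2R]`, with
`|φ'|, |φ''| ≤ C / R`. Multiply the equation by `φ η'(w)`, where `η(w) = √(w² + δ²)`, and integrate
by parts in `x`. The mixed term `φ η''(w) ∂ₓw g` is absorbed by the dissipation
`-ε φ η''(w) (∂ₓw)²` through Young's inequality, at a cost of order `η''(w) w² ≤ δ`; the other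
errors carry a derivative of `φ`. Integrating in time and letting `δ → 0` (`entropy_time`) gives
`∫_{[-R, R]} |w(T)| ≤ ‖w(0)‖₁ + T A N / R` with `A` independent of `R`, as soon as
`∫_{[-2R, 2R]} |w(t)| ≤ N` for all `t ∈ [0, T]` (`local_L1_bound`).

This is used twice (`abstract_contraction`). Boundedness of `w` permits `N` proportional to `R`, which
yields a bound `K` on `∫_{[-R, R]} |w(t)|` uniform in `R` and in `t ∈ [0, T]`. With `N = K` the error
is now `O(1 / R)`, and `R → ∞` concludes.
-/

/-- Cutoffs at scale `R`, given with their first two derivatives, with a constant `C` in the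
derivative bounds that does not depend on `R`. -/
lemma exists_cutoff : ∃ C : ℝ, 0 ≤ C ∧ ∀ R : ℝ, 1 ≤ R → ∃ φ φ1 φ2 : ℝ → ℝ,
    (∀ x, HasDerivAt φ (φ1 x) x) ∧ (∀ x, HasDerivAt φ1 (φ2 x) x) ∧ Continuous φ2 ∧
    (∀ x, 0 ≤ φ x) ∧ (∀ x, φ x ≤ 1) ∧ (∀ x, |x| ≤ R → φ x = 1) ∧
    (∀ x, |x| = 2 * R → φ x = 0 ∧ φ1 x = 0) ∧
    (∀ x, |φ1 x| ≤ C / R) ∧ (∀ x, |φ2 x| ≤ C / R) := by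
  let f : ContDiffBump (0 : ℝ) := ⟨1, 2, one_pos, one_lt_two⟩
  have hf : ContDiff ℝ 2 f := f.contDiff
  have hf1 : ContDiff ℝ 1 (deriv f) := by
    have : ContDiff ℝ (1 + 1) f := by simpa [one_add_one_eq_two] using hf
    exact (contDiff_succ_iff_deriv.1 this).2.2
  have hf2 : Continuous (deriv (deriv f)) := hf1.continuous_deriv le_rfl
  have hd (x : ℝ) : HasDerivAt f (deriv f x) x := (hf.differentiable (by norm_num) x).hasDerivAt
  have hd1 (x : ℝ) : HasDerivAt (deriv f) (deriv (deriv f) x) x :=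
    (hf1.differentiable (by norm_num) x).hasDerivAt
  obtain ⟨C₁, h₁⟩ := f.hasCompactSupport.deriv.exists_bound_of_continuous hf1.continuous
  obtain ⟨C₂, h₂⟩ := f.hasCompactSupport.deriv.deriv.exists_bound_of_continuous hf2
  have hC : 0 ≤ max C₁ C₂ := ((norm_nonneg _).trans (h₁ 0)).trans (le_max_left _ _)
  refine ⟨max C₁ C₂, hC, fun R hR => ?_⟩
  have hR0 : 0 < R := by linarith
  have hlin (x : ℝ) : HasDerivAt (fun y : ℝ => y / R) (1 / R) x := (hasDerivAt_id x).div_const R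
  refine ⟨fun x => f (x / R), fun x => deriv f (x / R) / R,
    fun x => deriv (deriv f) (x / R) / R / R, fun x => ?_, fun x => ?_, by fun_prop,
    fun x => f.nonneg, fun x => f.le_one, fun x hx => ?_, fun x hx => ?_, fun x => ?_, fun x => ?_⟩
  · have := (hd (x / R)).comp x (hlin x)
    exact this.congr_deriv (by ring)
  · have := ((hd1 (x / R)).comp x (hlin x)).div_const R
    exact this.congr_deriv (by ring)
  · refine f.one_of_mem_closedBall ?_
    rw [mem_closedBall_zero_iff, Real.norm_eq_abs, abs_div, abs_of_pos hR0]
    exact (div_le_one hR0).2 hx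
  · have h0 : f (x / R) = 0 := by
      refine f.zero_of_le_dist ?_
      rw [dist_zero_right, Real.norm_eq_abs, abs_div, abs_of_pos hR0, hx]
      exact le_of_eq (by field_simp; rfl)
    refine ⟨h0, ?_⟩
    -- the bump is nonnegative, so each of its zeros is a minimum
    have : IsLocalMin f (x / R) := Eventually.of_forall fun y => by
      rw [h0]; exact f.nonneg
    simp [this.deriv_eq_zero]
  · rw [abs_div, abs_of_pos hR0]
    gcongr
    exact (h₁ _).trans (le_max_left _ _)
  · rw [abs_div, abs_div, abs_of_pos hR0]
    refine (div_le_self (by positivity) hR).trans ?_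
    gcongr
    exact (h₂ _).trans (le_max_right _ _)

lemma hasDerivAt_sqrt_sq_add {δ : ℝ} (hδ : 0 < δ) {w : ℝ → ℝ} {w1 x : ℝ}
    (hw : HasDerivAt w w1 x) :
    HasDerivAt (fun y => √(w y ^ 2 + δ ^ 2)) (w x / √(w x ^ 2 + δ ^ 2) * w1) x := by
  have hpos : 0 < w x ^ 2 + δ ^ 2 := by positivity
  refine (((hw.pow 2).add_const (δ ^ 2)).sqrt hpos.ne').congr_deriv ?_
  have := Real.sqrt_pos.2 hpos
  simp
  field_simp

lemma hasDerivAt_div_sqrt_sq_add {δ : ℝ} (hδ : 0 < δ) {w : ℝ → ℝ} {w1 x : ℝ}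
    (hw : HasDerivAt w w1 x) :
    HasDerivAt (fun y => w y / √(w y ^ 2 + δ ^ 2)) (δ ^ 2 / √(w x ^ 2 + δ ^ 2) ^ 3 * w1) x := by
  have hpos : 0 < w x ^ 2 + δ ^ 2 := by positivity
  have hs := Real.sqrt_pos.2 hpos
  refine (hw.div (hasDerivAt_sqrt_sq_add hδ hw) hs.ne').congr_deriv ?_
  have hsq := Real.sq_sqrt hpos.le
  generalize √(w x ^ 2 + δ ^ 2) = s at *
  field_simp
  linear_combination w1 * hsq

/-- The pointwise form of the entropy estimate. The first bracket on the right is the `x`-derivative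
of `φ η'(w) (ε w' - g) - ε φ' η(w)` for `η(w) = √(w² + δ²)`, so it integrates to zero when `φ` and
`φ'` vanish at the endpoints. -/
lemma entropy_pointwise {ε L δ c w w1 w2 g g1 φ φ1 φ2 : ℝ} (hε : 0 < ε) (hL : 0 ≤ L) (hδ : 0 < δ)
    (hg : |g| ≤ L * |w|) (h0 : 0 ≤ φ) (h1 : φ ≤ 1) (hφ1 : |φ1| ≤ c) (hφ2 : |φ2| ≤ c) :
    φ * (w / √(w ^ 2 + δ ^ 2)) * (ε * w2 - g1) ≤
      ((φ1 * (w / √(w ^ 2 + δ ^ 2)) + φ * (δ ^ 2 / √(w ^ 2 + δ ^ 2) ^ 3 * w1)) * (ε * w1 - g)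
        + φ * (w / √(w ^ 2 + δ ^ 2)) * (ε * w2 - g1)
        - ε * (φ2 * √(w ^ 2 + δ ^ 2) + φ1 * (w / √(w ^ 2 + δ ^ 2) * w1)))
      + ((ε + L) * c * |w| + δ * (ε * c + L ^ 2 / (4 * ε))) := by
  have hpos : 0 < w ^ 2 + δ ^ 2 := by positivity
  have hs := Real.sqrt_pos.2 hpos
  have hsq := Real.sq_sqrt hpos.le
  set s := √(w ^ 2 + δ ^ 2)
  have hws : |w| ≤ s := Real.abs_le_sqrt (by nlinarith)
  have hδs : δ ≤ s := by
    apply Real.le_sqrt_of_sq_le; nlinarith [sq_nonneg w]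
  have hsle : s ≤ |w| + δ := by
    apply Real.sqrt_le_iff.2 ⟨by positivity, ?_⟩
    nlinarith [sq_abs w, abs_nonneg w]
  have hc : 0 ≤ c := (abs_nonneg _).trans hφ1
  have e1 : φ1 * (w / s) * g ≤ L * c * |w| := by
    have : |φ1 * (w / s) * g| ≤ c * 1 * (L * |w|) := by
      rw [abs_mul, abs_mul]
      gcongr
      rw [abs_div, abs_of_pos hs]
      exact (div_le_one hs).2 hws
    linarith [le_abs_self (φ1 * (w / s) * g)]
  have e2 : ε * (φ2 * s) ≤ ε * (c * (|w| + δ)) := by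
    have : φ2 ≤ c := (le_abs_self _).trans hφ2
    gcongr
  -- Young's inequality absorbs the mixed term into the viscous dissipation
  have e3 : φ * (δ ^ 2 / s ^ 3 * w1) * (g - ε * w1) ≤ δ * (L ^ 2 / (4 * ε)) := by
    have y : w1 * (g - ε * w1) ≤ g ^ 2 / (4 * ε) := by
      rw [le_div_iff₀ (by positivity)]
      nlinarith [sq_nonneg (g - 2 * ε * w1)]
    have hg2 : g ^ 2 ≤ L ^ 2 * s ^ 2 := by
      have : |g| ≤ L * s := hg.trans (by gcongr)
      have := pow_le_pow_left₀ (abs_nonneg g) this 2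
      rw [sq_abs] at this
      linarith [mul_pow L s 2]
    have z : δ ^ 2 / s ^ 3 * (g ^ 2 / (4 * ε)) ≤ δ * (L ^ 2 / (4 * ε)) := by
      calc δ ^ 2 / s ^ 3 * (g ^ 2 / (4 * ε)) ≤ δ ^ 2 / s ^ 3 * (L ^ 2 * s ^ 2 / (4 * ε)) := by
            gcongr
        _ = δ * (L ^ 2 / (4 * ε)) * (δ / s) := by field_simp
        _ ≤ δ * (L ^ 2 / (4 * ε)) * 1 := by
            gcongr
            exact (div_le_one hs).2 hδs
        _ = _ := mul_one _
    calc φ * (δ ^ 2 / s ^ 3 * w1) * (g - ε * w1) = φ * (δ ^ 2 / s ^ 3 * (w1 * (g - ε * w1))) := by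
          ring
      _ ≤ φ * (δ ^ 2 / s ^ 3 * (g ^ 2 / (4 * ε))) := by gcongr
      _ ≤ 1 * (δ * (L ^ 2 / (4 * ε))) := by gcongr
      _ = _ := one_mul _
  linarith

/-- The entropy estimate at a fixed time: the left side is the value of `d/dt ∫ φ √(w² + δ²)` along
the equation `∂ₜ w = ε ∂ₓₓ w - ∂ₓ g`. -/
lemma entropy_space {ε L δ c S : ℝ} {w w1 w2 g g1 φ φ1 φ2 : ℝ → ℝ}
    (hε : 0 < ε) (hL : 0 ≤ L) (hδ : 0 < δ) (hS : 0 ≤ S)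
    (hw : ∀ x, HasDerivAt w (w1 x) x) (hw1 : ∀ x, HasDerivAt w1 (w2 x) x) (hw2 : Continuous w2)
    (hg : ∀ x, HasDerivAt g (g1 x) x) (hg1 : Continuous g1)
    (hgw : ∀ x, |g x| ≤ L * |w x|)
    (hφ : ∀ x, HasDerivAt φ (φ1 x) x) (hφ1 : ∀ x, HasDerivAt φ1 (φ2 x) x) (hφ2 : Continuous φ2)
    (h0 : ∀ x, 0 ≤ φ x) (h1 : ∀ x, φ x ≤ 1) (hb : ∀ x, |x| = S → φ x = 0 ∧ φ1 x = 0)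
    (hc1 : ∀ x, |φ1 x| ≤ c) (hc2 : ∀ x, |φ2 x| ≤ c) :
    ∫ x in (-S)..S, φ x * (w x / √(w x ^ 2 + δ ^ 2)) * (ε * w2 x - g1 x) ≤
      (ε + L) * c * (∫ x in (-S)..S, |w x|) + 2 * S * (δ * (ε * c + L ^ 2 / (4 * ε))) := by
  have cw : Continuous w := continuous_iff_continuousAt.2 fun x => (hw x).continuousAt
  have cw1 : Continuous w1 := continuous_iff_continuousAt.2 fun x => (hw1 x).continuousAt
  have cg : Continuous g := continuous_iff_continuousAt.2 fun x => (hg x).continuousAt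
  have cφ : Continuous φ := continuous_iff_continuousAt.2 fun x => (hφ x).continuousAt
  have cφ1 : Continuous φ1 := continuous_iff_continuousAt.2 fun x => (hφ1 x).continuousAt
  have hne (x : ℝ) : √(w x ^ 2 + δ ^ 2) ≠ 0 := (Real.sqrt_pos.2 (by positivity)).ne'
  have hne3 (x : ℝ) : √(w x ^ 2 + δ ^ 2) ^ 3 ≠ 0 := pow_ne_zero 3 (hne x)
  set G1 : ℝ → ℝ := fun x =>
    (φ1 x * (w x / √(w x ^ 2 + δ ^ 2)) + φ x * (δ ^ 2 / √(w x ^ 2 + δ ^ 2) ^ 3 * w1 x))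
        * (ε * w1 x - g x)
      + φ x * (w x / √(w x ^ 2 + δ ^ 2)) * (ε * w2 x - g1 x)
      - ε * (φ2 x * √(w x ^ 2 + δ ^ 2) + φ1 x * (w x / √(w x ^ 2 + δ ^ 2) * w1 x)) with hG1
  have cG1 : Continuous G1 := by fun_prop (disch := assumption)
  have hG : ∀ x, HasDerivAt (fun y => φ y * (w y / √(w y ^ 2 + δ ^ 2)) * (ε * w1 y - g y)
      - ε * (φ1 y * √(w y ^ 2 + δ ^ 2))) (G1 x) x := fun x =>
    (((hφ x).mul (hasDerivAt_div_sqrt_sq_add hδ (hw x))).mul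
      (((hw1 x).const_mul ε).sub (hg x))).sub
      (((hφ1 x).mul (hasDerivAt_sqrt_sq_add hδ (hw x))).const_mul ε)
  have hI : ∫ x in (-S)..S, G1 x = 0 := by
    rw [intervalIntegral.integral_eq_sub_of_hasDerivAt (fun x _ => hG x)
      (cG1.intervalIntegrable _ _)]
    obtain ⟨a, b⟩ := hb S (abs_of_nonneg hS)
    obtain ⟨a₂, b₂⟩ := hb (-S) (by rw [abs_neg, abs_of_nonneg hS])
    simp [a, b, a₂, b₂]
  calc _ ≤ ∫ x in (-S)..S, (G1 x + ((ε + L) * c * |w x| + δ * (ε * c + L ^ 2 / (4 * ε)))) := by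
        refine intervalIntegral.integral_mono_on (by linarith)
          (Continuous.intervalIntegrable (by fun_prop (disch := assumption)) _ _)
          (Continuous.intervalIntegrable (by fun_prop) _ _) fun x _ => ?_
        exact entropy_pointwise hε hL hδ (hgw x) (h0 x) (h1 x) (hc1 x) (hc2 x)
    _ = _ := by
        rw [intervalIntegral.integral_add (cG1.intervalIntegrable _ _)
          (Continuous.intervalIntegrable (by fun_prop) _ _), hI,
          intervalIntegral.integral_add (Continuous.intervalIntegrable (by fun_prop) _ _)
          (Continuous.intervalIntegrable (by fun_prop) _ _),
          intervalIntegral.integral_const_mul, intervalIntegral.integral_const, smul_eq_mul]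
        ring

/-- The localized Kato inequality, integrated over `[0, T]`; it follows from `entropy_space` as
`δ → 0`. -/
lemma entropy_time {ε L c S T N : ℝ} {w g : ℝ → ℝ → ℝ} {φ φ1 φ2 : ℝ → ℝ}
    (hε : 0 < ε) (hL : 0 ≤ L) (hS : 0 ≤ S) (hT : 0 ≤ T)
    (hw : ContDiff ℝ 2 (fun p : ℝ × ℝ => w p.1 p.2))
    (hg : ContDiff ℝ 1 (fun p : ℝ × ℝ => g p.1 p.2))
    (hgw : ∀ t x, 0 ≤ t → |g t x| ≤ L * |w t x|)
    (hpde : ∀ t x, 0 ≤ t →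
      deriv (fun s => w s x) t = ε * deriv (deriv (w t)) x - deriv (g t) x)
    (hφ : ∀ x, HasDerivAt φ (φ1 x) x) (hφ1 : ∀ x, HasDerivAt φ1 (φ2 x) x) (hφ2 : Continuous φ2)
    (h0 : ∀ x, 0 ≤ φ x) (h1 : ∀ x, φ x ≤ 1) (hb : ∀ x, |x| = S → φ x = 0 ∧ φ1 x = 0)
    (hc1 : ∀ x, |φ1 x| ≤ c) (hc2 : ∀ x, |φ2 x| ≤ c)
    (hN : ∀ t, 0 ≤ t → t ≤ T → ∫ x in (-S)..S, |w t x| ≤ N) :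
    ∫ x in (-S)..S, φ x * |w T x| ≤
      (∫ x in (-S)..S, φ x * |w 0 x|) + T * ((ε + L) * c * N) := by
  have cw : Continuous (fun p : ℝ × ℝ => w p.1 p.2) := hw.continuous
  have cwt (t : ℝ) : Continuous (w t) := cw.comp (by fun_prop : Continuous fun x : ℝ => (t, x))
  have cφ : Continuous φ := continuous_iff_continuousAt.2 fun x => (hφ x).continuousAt
  have hc : 0 ≤ c := (abs_nonneg _).trans (hc1 0)
  set dt : ℝ → ℝ → ℝ := fun t x => deriv (fun s => w s x) t with hdt
  have hwt (t x : ℝ) : HasDerivAt (fun s => w s x) (dt t x) t :=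
    ((hw.comp (by fun_prop : ContDiff ℝ 2 fun s : ℝ => (s, x))).differentiable
      (by norm_num) t).hasDerivAt
  have cdt : Continuous (fun p : ℝ × ℝ => dt p.1 p.2) := by
    have : (fun p : ℝ × ℝ => dt p.1 p.2) =
        fun p => fderiv ℝ (fun p : ℝ × ℝ => w p.1 p.2) p (1, 0) := by
      funext p
      have h2 : HasFDerivAt (fun p : ℝ × ℝ => w p.1 p.2)
        (fderiv ℝ (fun p : ℝ × ℝ => w p.1 p.2) p) (p.1, p.2) :=
        (hw.differentiable (by norm_num) p).hasFDerivAt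
      exact (h2.comp_hasDerivAt p.1
        ((hasDerivAt_id p.1).prodMk (hasDerivAt_const p.1 p.2))).deriv
    rw [this]
    exact (hw.continuous_fderiv (by norm_num)).clm_apply continuous_const
  set K : ℝ := 2 * S + T * (2 * S * (ε * c + L ^ 2 / (4 * ε))) with hK
  have key (δ : ℝ) (hδ : 0 < δ) : ∫ x in (-S)..S, φ x * |w T x| ≤
      (∫ x in (-S)..S, φ x * |w 0 x|) + T * ((ε + L) * c * N) + δ * K := by
    have hne (t x : ℝ) : √(w t x ^ 2 + δ ^ 2) ≠ 0 := (Real.sqrt_pos.2 (by positivity)).ne'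
    have hne' (p : ℝ × ℝ) : √(w p.1 p.2 ^ 2 + δ ^ 2) ≠ 0 := hne _ _
    set D : ℝ → ℝ → ℝ := fun x t => φ x * (w t x / √(w t x ^ 2 + δ ^ 2)) * dt t x with hD
    have cD' : Continuous (fun p : ℝ × ℝ =>
        φ p.2 * (w p.1 p.2 / √(w p.1 p.2 ^ 2 + δ ^ 2)) * dt p.1 p.2) := by
      fun_prop (disch := assumption)
    have cD : Continuous (Function.uncurry D) := cD'.comp continuous_swap
    have ftc (x : ℝ) : ∫ t in (0 : ℝ)..T, D x t =
        φ x * √(w T x ^ 2 + δ ^ 2) - φ x * √(w 0 x ^ 2 + δ ^ 2) := by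
      refine intervalIntegral.integral_eq_sub_of_hasDerivAt
        (f := fun t => φ x * √(w t x ^ 2 + δ ^ 2)) (fun t _ => ?_)
        (Continuous.intervalIntegrable (cD.comp (by fun_prop : Continuous fun t : ℝ => (x, t))) _ _)
      exact ((hasDerivAt_sqrt_sq_add hδ (hwt t x)).const_mul (φ x)).congr_deriv (mul_assoc _ _ _).symm
    have swap : ∫ x in (-S)..S, ∫ t in (0 : ℝ)..T, D x t =
        ∫ t in (0 : ℝ)..T, ∫ x in (-S)..S, D x t := by
      refine intervalIntegral_intervalIntegral_swap ?_
      exact (cD.continuousOn.integrableOn_compact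
        (isCompact_uIcc.prod isCompact_uIcc)).mono_set
        (prod_mono uIoc_subset_uIcc uIoc_subset_uIcc)
    have inner (t : ℝ) (ht : t ∈ Icc 0 T) : ∫ x in (-S)..S, D x t ≤
        (ε + L) * c * N + 2 * S * (δ * (ε * c + L ^ 2 / (4 * ε))) := by
      have hwx : ContDiff ℝ 2 (w t) := hw.comp (by fun_prop : ContDiff ℝ 2 fun x : ℝ => (t, x))
      have hgx : ContDiff ℝ 1 (g t) := hg.comp (by fun_prop : ContDiff ℝ 1 fun x : ℝ => (t, x))
      have hw1 : ContDiff ℝ 1 (deriv (w t)) := by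
        have : ContDiff ℝ (1 + 1) (w t) := by simpa [one_add_one_eq_two] using hwx
        exact (contDiff_succ_iff_deriv.1 this).2.2
      have := entropy_space hε hL hδ hS
        (fun x => (hwx.differentiable (by norm_num) x).hasDerivAt)
        (fun x => (hw1.differentiable (by norm_num) x).hasDerivAt) (hw1.continuous_deriv le_rfl)
        (fun x => (hgx.differentiable (by norm_num) x).hasDerivAt) (hgx.continuous_deriv le_rfl)
        (fun x => hgw t x ht.1) hφ hφ1 hφ2 h0 h1 hb hc1 hc2
      simp only [hD, hdt, hpde t _ ht.1]
      refine this.trans ?_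
      have := hN t ht.1 ht.2
      gcongr
    have cE (t : ℝ) : Continuous fun x => φ x * √(w t x ^ 2 + δ ^ 2) := by
      have := cwt t
      fun_prop
    have cA (t : ℝ) : Continuous fun x => φ x * |w t x| := by
      have := cwt t
      fun_prop
    have total : (∫ x in (-S)..S, φ x * √(w T x ^ 2 + δ ^ 2))
        - (∫ x in (-S)..S, φ x * √(w 0 x ^ 2 + δ ^ 2)) ≤
        T * ((ε + L) * c * N + 2 * S * (δ * (ε * c + L ^ 2 / (4 * ε)))) := by
      rw [← intervalIntegral.integral_sub ((cE T).intervalIntegrable _ _)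
        ((cE 0).intervalIntegrable _ _)]
      simp only [← ftc]
      rw [swap]
      refine (intervalIntegral.integral_mono_on hT (Continuous.intervalIntegrable ?_ _ _)
        (continuous_const.intervalIntegrable _ _) inner).trans ?_
      · exact intervalIntegral.continuous_parametric_intervalIntegral_of_continuous'
          (f := fun t x => D x t) cD' _ _
      · rw [intervalIntegral.integral_const, smul_eq_mul, sub_zero]
    have lower : ∫ x in (-S)..S, φ x * |w T x| ≤
        ∫ x in (-S)..S, φ x * √(w T x ^ 2 + δ ^ 2) := by
      refine intervalIntegral.integral_mono_on (by linarith) ((cA T).intervalIntegrable _ _)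
        ((cE T).intervalIntegrable _ _) fun x _ => ?_
      exact mul_le_mul_of_nonneg_left (Real.abs_le_sqrt (by nlinarith)) (h0 x)
    have upper : ∫ x in (-S)..S, φ x * √(w 0 x ^ 2 + δ ^ 2) ≤
        (∫ x in (-S)..S, φ x * |w 0 x|) + 2 * S * δ := by
      calc _ ≤ ∫ x in (-S)..S, (φ x * |w 0 x| + δ) := by
            refine intervalIntegral.integral_mono_on (by linarith) ((cE 0).intervalIntegrable _ _)
              (((cA 0).add continuous_const).intervalIntegrable _ _) fun x _ => ?_
            have : √(w 0 x ^ 2 + δ ^ 2) ≤ |w 0 x| + δ := by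
              apply Real.sqrt_le_iff.2 ⟨by positivity, ?_⟩
              nlinarith [sq_abs (w 0 x), abs_nonneg (w 0 x)]
            nlinarith [mul_le_mul_of_nonneg_left this (h0 x), h1 x]
        _ = _ := by
            rw [intervalIntegral.integral_add ((cA 0).intervalIntegrable _ _)
              (continuous_const.intervalIntegrable _ _), intervalIntegral.integral_const,
              smul_eq_mul]
            ring
    rw [hK]
    linarith
  have hlim : Tendsto (fun δ : ℝ => (∫ x in (-S)..S, φ x * |w 0 x|) + T * ((ε + L) * c * N) + δ * K)
      (nhdsWithin 0 (Ioi 0))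
      (nhds ((∫ x in (-S)..S, φ x * |w 0 x|) + T * ((ε + L) * c * N) + 0 * K)) :=
    (Continuous.tendsto (by fun_prop) 0).mono_left nhdsWithin_le_nhds
  rw [zero_mul, add_zero] at hlim
  exact ge_of_tendsto hlim (eventually_mem_nhdsWithin.mono fun δ hδ => key δ hδ)

/-- A bound `N` for the `L¹` norm on `[-2R, 2R]` during `[0, T]` improves to `‖w(0)‖₁ + O(N / R)` on
`[-R, R]` at time `T`. -/
lemma local_L1_bound {ε L : ℝ} {w g : ℝ → ℝ → ℝ} (hε : 0 < ε) (hL : 0 ≤ L)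
    (hw : ContDiff ℝ 2 (fun p : ℝ × ℝ => w p.1 p.2))
    (hg : ContDiff ℝ 1 (fun p : ℝ × ℝ => g p.1 p.2))
    (hgw : ∀ t x, 0 ≤ t → |g t x| ≤ L * |w t x|)
    (hpde : ∀ t x, 0 ≤ t →
      deriv (fun s => w s x) t = ε * deriv (deriv (w t)) x - deriv (g t) x)
    (hint : Integrable (w 0)) :
    ∃ A : ℝ, 0 ≤ A ∧ ∀ R T N : ℝ, 1 ≤ R → 0 ≤ T →
      (∀ t, 0 ≤ t → t ≤ T → ∫ x in (-(2 * R))..(2 * R), |w t x| ≤ N) →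
      ∫ x in (-R)..R, |w T x| ≤ (∫ x, |w 0 x|) + T * (A * (N / R)) := by
  obtain ⟨C, hC, hcut⟩ := exists_cutoff
  refine ⟨(ε + L) * C, by positivity, fun R T N hR hT hN => ?_⟩
  obtain ⟨φ, φ1, φ2, hφ, hφ1, hφ2, h0, h1, hone, hb, hc1, hc2⟩ := hcut R hR
  have main := entropy_time hε hL (by linarith) hT hw hg hgw hpde hφ hφ1 hφ2 h0 h1 hb hc1 hc2 hN
  have cφ : Continuous φ := continuous_iff_continuousAt.2 fun x => (hφ x).continuousAt
  have cA (t : ℝ) : Continuous fun x => φ x * |w t x| := by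
    have : Continuous (w t) := hw.continuous.comp (by fun_prop : Continuous fun x : ℝ => (t, x))
    fun_prop
  have lower : ∫ x in (-R)..R, |w T x| ≤ ∫ x in (-(2 * R))..(2 * R), φ x * |w T x| := by
    calc _ = ∫ x in (-R)..R, φ x * |w T x| := by
          refine intervalIntegral.integral_congr fun x hx => ?_
          rw [uIcc_of_le (by linarith)] at hx
          simp [hone x (abs_le.2 hx)]
      _ ≤ _ := by
          refine intervalIntegral.integral_mono_interval (by linarith) (by linarith) (by linarith)
            (Eventually.of_forall fun x => mul_nonneg (h0 x) (abs_nonneg _))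
            ((cA T).intervalIntegrable _ _)
  have upper : ∫ x in (-(2 * R))..(2 * R), φ x * |w 0 x| ≤ ∫ x, |w 0 x| := by
    rw [intervalIntegral.integral_of_le (by linarith)]
    calc _ ≤ ∫ x in Ioc (-(2 * R)) (2 * R), |w 0 x| := by
          refine integral_mono_ae ((cA 0).integrableOn_Ioc) hint.abs.integrableOn
            (Eventually.of_forall fun x => ?_)
          exact mul_le_of_le_one_left (abs_nonneg _) (h1 x)
      _ ≤ _ := setIntegral_le_integral hint.abs (Eventually.of_forall fun x => abs_nonneg _)
  have : (ε + L) * (C / R) * N = (ε + L) * C * (N / R) := by ring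
  rw [this] at main
  linarith

/-- `L¹` contraction for `∂ₜ w = ε ∂ₓₓ w - ∂ₓ g` with `|g| ≤ L |w|` and `w` bounded. -/
lemma abstract_contraction {ε L M : ℝ} {w g : ℝ → ℝ → ℝ} (hε : 0 < ε) (hL : 0 ≤ L)
    (hw : ContDiff ℝ 2 (fun p : ℝ × ℝ => w p.1 p.2))
    (hg : ContDiff ℝ 1 (fun p : ℝ × ℝ => g p.1 p.2))
    (hgw : ∀ t x, 0 ≤ t → |g t x| ≤ L * |w t x|)
    (hpde : ∀ t x, 0 ≤ t →
      deriv (fun s => w s x) t = ε * deriv (deriv (w t)) x - deriv (g t) x)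
    (hM : ∀ t x, 0 ≤ t → |w t x| ≤ M)
    (hint : ∀ t, 0 ≤ t → Integrable (w t)) {T : ℝ} (hT : 0 ≤ T) :
    ∫ x, |w T x| ≤ ∫ x, |w 0 x| := by
  obtain ⟨A, hA, hloc⟩ := local_L1_bound hε hL hw hg hgw hpde (hint 0 le_rfl)
  have hM0 : 0 ≤ M := (abs_nonneg _).trans (hM 0 0 le_rfl)
  set K : ℝ := (∫ x, |w 0 x|) + T * (A * (4 * M)) with hK
  -- a first use of the local bound, with the trivial estimate `N = 4 R M`
  have step1 (R : ℝ) (hR : 1 ≤ R) (t : ℝ) (ht : 0 ≤ t) (htT : t ≤ T) :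
      ∫ x in (-R)..R, |w t x| ≤ K := by
    have h := hloc R t (4 * R * M) hR ht fun s hs _ => by
      have cs : Continuous (w s) := hw.continuous.comp (by fun_prop : Continuous fun x : ℝ => (s, x))
      refine (intervalIntegral.integral_mono_on (by linarith) (cs.abs.intervalIntegrable _ _)
        (continuous_const.intervalIntegrable _ _) fun x _ => hM s x hs).trans ?_
      rw [intervalIntegral.integral_const, smul_eq_mul]
      exact le_of_eq (by ring)
    have e : 4 * R * M / R = 4 * M := by field_simp
    rw [e] at h
    have : t * (A * (4 * M)) ≤ T * (A * (4 * M)) := by gcongr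
    linarith
  have step2 (R : ℝ) (hR : 1 ≤ R) :
      ∫ x in (-R)..R, |w T x| ≤ (∫ x, |w 0 x|) + T * (A * (K / R)) :=
    hloc R T K hR hT (step1 (2 * R) (by linarith))
  have l1 : Tendsto (fun R : ℝ => ∫ x in (-R)..R, |w T x|) atTop (nhds (∫ x, |w T x|)) :=
    intervalIntegral_tendsto_integral (hint T hT).abs tendsto_neg_atTop_atBot tendsto_id
  have l2 : Tendsto (fun R : ℝ => (∫ x, |w 0 x|) + T * (A * (K / R))) atTop
      (nhds ((∫ x, |w 0 x|) + T * (A * 0))) :=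
    (((tendsto_const_nhds.div_atTop tendsto_id).const_mul A).const_mul T).const_add _
  rw [mul_zero, mul_zero, add_zero] at l2
  exact le_of_tendsto_of_tendsto l1 l2 ((eventually_ge_atTop 1).mono step2)

/-- **Kruzhkov L¹-stability for the viscosity method.**
For two bounded C² classical solutions `u, v` of `∂ₜ w + ∂ₓ (F(w)) = ε ∂ₓₓ w` whose
difference (together with its first two spatial derivatives) is integrable and decays
at spatial infinity, the L¹-distance `∫ |u(t,x) − v(t,x)| dx` is nonincreasing in time. -/
theorem kruzhkov_L1_stability
    (F : ℝ → ℝ) (hF : ContDiff ℝ 2 F) (ε : ℝ) (hε : 0 < ε)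
    (u v : ℝ → ℝ → ℝ)
    (hregu : ContDiff ℝ 2 (fun p : ℝ × ℝ => u p.1 p.2))
    (hregv : ContDiff ℝ 2 (fun p : ℝ × ℝ => v p.1 p.2))
    (hbddu : ∃ M : ℝ, ∀ t x : ℝ, 0 ≤ t → |u t x| ≤ M)
    (hbddv : ∃ M : ℝ, ∀ t x : ℝ, 0 ≤ t → |v t x| ≤ M)
    (hpdeu : ∀ t x : ℝ, 0 ≤ t →
      deriv (fun s => u s x) t + deriv (fun y => F (u t y)) x
        = ε * deriv (deriv (fun y => u t y)) x)
    (hpdev : ∀ t x : ℝ, 0 ≤ t →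
      deriv (fun s => v s x) t + deriv (fun y => F (v t y)) x
        = ε * deriv (deriv (fun y => v t y)) x)
    (hint : ∀ t : ℝ, 0 ≤ t →
      Integrable (fun x => u t x - v t x)
      ∧ Integrable (fun x => deriv (fun y => u t y - v t y) x)
      ∧ Integrable (fun x => deriv (deriv (fun y => u t y - v t y)) x))
    (hdecay : ∀ t : ℝ, 0 ≤ t →
      Tendsto (fun x => u t x - v t x) (cocompact ℝ) (nhds 0)
      ∧ Tendsto (fun x => deriv (fun y => u t y - v t y) x) (cocompact ℝ) (nhds 0)) :
    ∀ t : ℝ, 0 ≤ t →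
      (∫ x : ℝ, |u t x - v t x|) ≤ ∫ x : ℝ, |u 0 x - v 0 x| := by
  obtain ⟨Mu, hMu⟩ := hbddu
  obtain ⟨Mv, hMv⟩ := hbddv
  set M := max Mu Mv
  have hF1 : ContDiff ℝ 1 F := hF.of_le (by norm_num)
  obtain ⟨L, hL⟩ := (isCompact_Icc (a := -M) (b := M)).exists_bound_of_continuousOn
    (hF1.continuous_deriv le_rfl).continuousOn
  have memu (t x : ℝ) (ht : 0 ≤ t) : u t x ∈ Icc (-M) M :=
    abs_le.1 ((hMu t x ht).trans (le_max_left _ _))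
  have memv (t x : ℝ) (ht : 0 ≤ t) : v t x ∈ Icc (-M) M :=
    abs_le.1 ((hMv t x ht).trans (le_max_right _ _))
  have hL0 : 0 ≤ L := (norm_nonneg _).trans (hL _ (memu 0 0 le_rfl))
  intro T hT
  refine abstract_contraction (L := L) (M := Mu + Mv) (w := fun t x => u t x - v t x)
    (g := fun t x => F (u t x) - F (v t x)) hε hL0 (hregu.sub hregv)
    ((hF1.comp (hregu.of_le (by norm_num))).sub (hF1.comp (hregv.of_le (by norm_num))))
    (fun t x ht => ?_) (fun t x ht => ?_) (fun t x ht => ?_) (fun t ht => (hint t ht).1) hT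
  · exact (convex_Icc (-M) M).norm_image_sub_le_of_norm_deriv_le
      (fun y _ => hF1.differentiable (by norm_num) y) hL (memv t x ht) (memu t x ht)
  · have sx (z : ℝ → ℝ → ℝ) (hz : ContDiff ℝ 2 (fun p : ℝ × ℝ => z p.1 p.2)) :
        ContDiff ℝ 2 (z t) := hz.comp (by fun_prop : ContDiff ℝ 2 fun y : ℝ => (t, y))
    have st (z : ℝ → ℝ → ℝ) (hz : ContDiff ℝ 2 (fun p : ℝ × ℝ => z p.1 p.2)) :
        DifferentiableAt ℝ (fun s => z s x) t :=
      (hz.comp (by fun_prop : ContDiff ℝ 2 fun s : ℝ => (s, x))).differentiable (by norm_num) t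
    have sF (z : ℝ → ℝ → ℝ) (hz : ContDiff ℝ 2 (fun p : ℝ × ℝ => z p.1 p.2)) :
        DifferentiableAt ℝ (fun y => F (z t y)) x :=
      (hF.comp (sx z hz)).differentiable (by norm_num) x
    have s1 (z : ℝ → ℝ → ℝ) (hz : ContDiff ℝ 2 (fun p : ℝ × ℝ => z p.1 p.2)) :
        DifferentiableAt ℝ (deriv (z t)) x := by
      have : ContDiff ℝ (1 + 1) (z t) := by simpa [one_add_one_eq_two] using sx z hz
      exact (contDiff_succ_iff_deriv.1 this).2.2.differentiable (by norm_num) x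
    have d1 : deriv (fun y => u t y - v t y) = fun y => deriv (u t) y - deriv (v t) y := by
      funext y
      exact deriv_fun_sub ((sx u hregu).differentiable (by norm_num) y)
        ((sx v hregv).differentiable (by norm_num) y)
    rw [deriv_fun_sub (st u hregu) (st v hregv), deriv_fun_sub (sF u hregu) (sF v hregv), d1,
      deriv_fun_sub (s1 u hregu) (s1 v hregv)]
    linarith [hpdeu t x ht, hpdev t x ht]
  · exact (abs_sub _ _).trans (add_le_add (hMu t x ht) (hMv t x ht))
end

section
/- (Invariant region for the viscous homentropic Euler system.) Let γ > 1, κ = (γ−1)²/(4γ), θ = (γ−1)/2, p(ρ) = κρ^γ, and ε > 0. Let (ρ, m) : [0,T] × ℝ → ℝ² be a bounded classical (C²) solution with ρ(t,x) > 0 of the viscous homentropic Euler system ∂_t ρ + ∂_x m = ε ∂_{xx} ρ, ∂_t m + ∂_x( m²/ρ + p(ρ) ) = ε ∂_{xx} m, such that u := m/ρ and ρ^θ are bounded together with their first spatial derivatives. If there is C₀ > 0 such that the Riemann invariants satisfy u(0,x) + ρ(0,x)^θ ≤ C₀ and u(0,x) − ρ(0,x)^θ ≥ −C₀ for all x ∈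 ℝ, then for all (t,x): u(t,x) + ρ(t,x)^θ ≤ C₀ and u(t,x) − ρ(t,x)^θ ≥ −C₀. Consequently 0 < ρ(t,x) ≤ C₀^{1/θ} and |m(t,x)| ≤ C₀ ρ(t,x). -/
/-!
Fix a sign `σ = ±1` and write `u = m/ρ`, `c = ρ^θ`. The Riemann invariant `w = u + c` itself
satisfies a parabolic inequality whose drift contains `ρ_x/ρ`, which may be unbounded because `ρ`
may decay at infinity. The density-weighted quantity
`g = ρ (σ u + c - C₀) = σ m + ρ^(1+θ) - C₀ ρ` does not have this defect: since `κγ = θ²`, the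
system gives

  `g_t + (u + σ θ c) g_x + (u_x - σ c_x) g = ε g_xx - ε θ (1+θ) ρ^(θ-1) ρ_x² ≤ ε g_xx`,

where all coefficients are bounded by hypothesis and `g` is bounded. The pointwise algebra is in
`euler_algebra`. The maximum principle on the strip `[0,T] × ℝ` (`strip_maximum_principle`,
with the barrier `δ (1 + x²)`) then gives `g ≤ 0`; dividing by `ρ > 0` yields `σ u + c ≤ C₀`
for both signs (`riemann_bound`), and the bounds on `ρ` and `m` follow.
-/

open MeasureTheory Filter Set

/-! ### Maximum principle on a strip -/

/-- Necessary second-order condition at a global maximum on the line. -/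
lemma second_deriv_nonpos_of_max {f f' : ℝ → ℝ} {f'' x : ℝ}
    (hf : ∀ y, HasDerivAt f (f' y) y) (hf' : HasDerivAt f' f'' x)
    (hmax : ∀ y, f y ≤ f x) : f'' ≤ 0 := by
  by_contra! hpos
  have hd : deriv f = f' := funext fun y => (hf y).deriv
  have hlm : IsLocalMax f x := Eventually.of_forall hmax
  have hmin : IsLocalMin f x := by
    apply isLocalMin_of_deriv_deriv_pos
    · rw [hd, hf'.deriv]; exact hpos
    · exact hlm.deriv_eq_zero
    · exact (hf x).continuousAt
  -- being both a local maximum and a local minimum, `x` has a neighbourhood where `f` is constant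
  have hconst : f =ᶠ[nhds x] fun _ => f x := by
    filter_upwards [hmin] with y hy
    exact le_antisymm (hmax y) hy
  have h2 : deriv (deriv f) x = 0 := by
    rw [hconst.deriv.deriv_eq]; simp
  rw [hd, hf'.deriv] at h2
  exact hpos.ne' h2

/-- First-order condition at a maximum over past times. -/
lemma time_deriv_nonneg_of_max {f : ℝ → ℝ} {f' t : ℝ} (ht : 0 < t)
    (hf : HasDerivAt f f' t) (hmax : ∀ s ∈ Icc 0 t, f s ≤ f t) : 0 ≤ f' := by
  have h1 := (hasDerivAt_iff_tendsto_slope.1 hf).mono_left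
    (nhdsWithin_mono t (fun s (hs : s < t) => hs.ne) : nhdsWithin t (Iio t) ≤ _)
  refine ge_of_tendsto h1 ?_
  filter_upwards [Ioo_mem_nhdsLT ht] with s hs
  rw [slope_def_field]
  exact div_nonneg_of_nonpos (by linarith [hmax s ⟨hs.1.le, hs.2.le⟩]) (by linarith [hs.2])

/-- Weak maximum principle on `[0,T] × ℝ` for subsolutions, bounded above, of a linear parabolic
equation with bounded coefficients. -/
lemma strip_maximum_principle {ε T K B : ℝ} (hε : 0 < ε)
    (g gt gx gxx b a : ℝ → ℝ → ℝ)
    (hcont : Continuous fun q : ℝ × ℝ => g q.1 q.2)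
    (ht : ∀ t ∈ Icc 0 T, ∀ x, HasDerivAt (fun s => g s x) (gt t x) t)
    (hx : ∀ t ∈ Icc 0 T, ∀ x, HasDerivAt (g t) (gx t x) x)
    (hxx : ∀ t ∈ Icc 0 T, ∀ x, HasDerivAt (gx t) (gxx t x) x)
    (hb : ∀ t ∈ Icc 0 T, ∀ x, |b t x| ≤ K)
    (ha : ∀ t ∈ Icc 0 T, ∀ x, |a t x| ≤ K)
    (hB : ∀ t ∈ Icc 0 T, ∀ x, g t x ≤ B)
    (hineq : ∀ t ∈ Icc 0 T, ∀ x, gt t x + b t x * gx t x + a t x * g t x ≤ ε * gxx t x)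
    (h0 : ∀ x, g 0 x ≤ 0) :
    ∀ t ∈ Icc 0 T, ∀ x, g t x ≤ 0 := by
  intro t₀ ht₀ x₀
  have hK : 0 ≤ K := (abs_nonneg _).trans (hb t₀ ht₀ x₀)
  -- `l` is chosen so that `δ (1 + x²)` is a strict supersolution after the factor `e^{-lt}`
  obtain ⟨l, hl⟩ : ∃ l, l = 2 * K + 2 * ε := ⟨_, rfl⟩
  have hl0 : 0 ≤ l := by rw [hl]; positivity
  have key : ∀ δ > 0, Real.exp (-l * t₀) * g t₀ x₀ ≤ δ * (1 + x₀ ^ 2) := by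
    intro δ hδ
    by_contra! hcon
    let G : ℝ × ℝ → ℝ := fun q => Real.exp (-l * q.1) * g q.1 q.2 - δ * (1 + q.2 ^ 2)
    have hGc : Continuous G := by
      have := hcont
      fun_prop
    -- beyond `|x| = L` the barrier exceeds the bound `B`
    let L : ℝ := |x₀| + |B| / δ + 1
    have hL1 : 1 ≤ L := by
      have : 0 ≤ |B| / δ := by positivity
      have := abs_nonneg x₀
      simp only [L]; linarith
    have hLB : |B| ≤ δ * L := by
      have h1 : |B| = δ * (|B| / δ) := by field_simp
      have := abs_nonneg x₀
      rw [h1]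
      apply mul_le_mul_of_nonneg_left _ hδ.le
      simp only [L]; linarith
    have hfar : ∀ t ∈ Icc 0 T, ∀ x, L ≤ |x| → G (t, x) ≤ 0 := by
      intro t ht' x hxL
      have h1 : Real.exp (-l * t) * g t x ≤ |B| := by
        have he1 : Real.exp (-l * t) ≤ 1 := by
          rw [Real.exp_le_one_iff]; nlinarith [mul_nonneg hl0 ht'.1]
        calc Real.exp (-l * t) * g t x ≤ Real.exp (-l * t) * |B| :=
              mul_le_mul_of_nonneg_left ((hB t ht' x).trans (le_abs_self B)) (Real.exp_pos _).le
          _ ≤ 1 * |B| := mul_le_mul_of_nonneg_right he1 (abs_nonneg B)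
          _ = |B| := one_mul _
      have h2 : L ≤ 1 + x ^ 2 := by
        rw [← sq_abs x]; nlinarith
      have h3 := mul_le_mul_of_nonneg_left h2 hδ.le
      simp only [G]; linarith
    have hx₀L : |x₀| ≤ L := by
      have : 0 ≤ |B| / δ := by positivity
      simp only [L]; linarith
    obtain ⟨q, hq, hqmax⟩ := (isCompact_Icc.prod isCompact_Icc :
      IsCompact (Icc (0 : ℝ) T ×ˢ Icc (-L) L)).exists_isMaxOn
      ⟨(t₀, x₀), ht₀, abs_le.1 hx₀L⟩ hGc.continuousOn
    obtain ⟨t, x⟩ := q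
    have htI : t ∈ Icc 0 T := hq.1
    have hGpos : 0 < G (t, x) := by
      have h1 : G (t₀, x₀) ≤ G (t, x) := hqmax ⟨ht₀, abs_le.1 hx₀L⟩
      have h2 : 0 < G (t₀, x₀) := by simp only [G]; linarith
      linarith
    have hglob : ∀ s ∈ Icc 0 T, ∀ y, G (s, y) ≤ G (t, x) := by
      intro s hs y
      by_cases hy : |y| ≤ L
      · exact hqmax ⟨hs, abs_le.1 hy⟩
      · exact (hfar s hs y (not_le.1 hy).le).trans hGpos.le
    have htpos : 0 < t := by
      rcases htI.1.eq_or_lt with h | h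
      · exfalso
        subst h
        simp only [G] at hGpos
        have := h0 x
        simp only [mul_zero, Real.exp_zero, one_mul] at hGpos
        nlinarith [sq_nonneg x]
      · exact h
    obtain ⟨E, hE⟩ : ∃ E, E = Real.exp (-l * t) := ⟨_, rfl⟩
    have hEpos : 0 < E := hE ▸ Real.exp_pos _
    have hGt : HasDerivAt (fun s => G (s, x)) (E * (-l) * g t x + E * gt t x) t := by
      have h1 : HasDerivAt (fun s => Real.exp (-l * s)) (E * (-l)) t := by
        have := ((hasDerivAt_id t).const_mul (-l)).exp
        simpa [hE] using this
      have h2 := (h1.mul (ht t htI x)).sub_const (δ * (1 + x ^ 2))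
      rw [← hE] at h2
      exact h2
    have hGx : ∀ y, HasDerivAt (fun y => G (t, y)) (E * gx t y - δ * (2 * y)) y := by
      intro y
      have h1 := (hx t htI y).const_mul E
      have h2 : HasDerivAt (fun y : ℝ => δ * (1 + y ^ 2)) (δ * (2 * y)) y := by
        have := (((hasDerivAt_id y).pow 2).const_add 1).const_mul δ
        simpa using this
      have h3 := h1.sub h2
      simp only [G, ← hE]
      exact h3
    have hGxx : HasDerivAt (fun y => E * gx t y - δ * (2 * y)) (E * gxx t x - δ * 2) x := by
      have h1 := (hxx t htI x).const_mul E
      have h2 : HasDerivAt (fun y : ℝ => δ * (2 * y)) (δ * 2) x := by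
        have := ((hasDerivAt_id x).const_mul 2).const_mul δ
        simpa using this
      exact h1.sub h2
    have c1 := time_deriv_nonneg_of_max htpos hGt
      fun s hs => hglob s ⟨hs.1, hs.2.trans htI.2⟩ x
    have c2 : E * gx t x - δ * (2 * x) = 0 :=
      IsLocalMax.hasDerivAt_eq_zero
        (Eventually.of_forall fun y => hglob t htI y) (hGx x)
    have c3 := second_deriv_nonpos_of_max hGx hGxx fun y => hglob t htI y
    have c4 : δ * (1 + x ^ 2) < E * g t x := by
      simp only [G, ← hE] at hGpos; linarith
    have c5 := mul_le_mul_of_nonneg_left (hineq t htI x) hEpos.le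
    have c6 : -(b t x * (δ * (2 * x))) ≤ K * (δ * (1 + x ^ 2)) := by
      have h1 : |2 * x| ≤ 1 + x ^ 2 := by
        rw [abs_le]; constructor <;> nlinarith [sq_nonneg (x - 1), sq_nonneg (x + 1)]
      calc -(b t x * (δ * (2 * x))) ≤ |b t x * (δ * (2 * x))| := neg_le_abs _
        _ = |b t x| * (δ * |2 * x|) := by rw [abs_mul, abs_mul, abs_of_pos hδ]
        _ ≤ K * (δ * (1 + x ^ 2)) := by
            gcongr
            exact hb t htI x
    have hPpos : 0 < E * g t x := lt_trans (by positivity) c4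
    have c7 : -(a t x * (E * g t x)) ≤ K * (E * g t x) := by
      rw [← neg_mul]
      exact mul_le_mul_of_nonneg_right ((neg_le_abs _).trans (ha t htI x)) hPpos.le
    have c8 : E * gx t x = δ * (2 * x) := by linarith
    have c9 : ε * (E * gxx t x) ≤ ε * (δ * 2) := mul_le_mul_of_nonneg_left (by linarith) hε.le
    have c10 : b t x * (E * gx t x) = b t x * (δ * (2 * x)) := by rw [c8]
    have c11 : K * (δ * (1 + x ^ 2)) ≤ K * (E * g t x) := mul_le_mul_of_nonneg_left c4.le hK
    have c12 : ε * (δ * (1 + x ^ 2)) < ε * (E * g t x) := mul_lt_mul_of_pos_left c4 hε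
    have c13 : 0 ≤ ε * δ * x ^ 2 := by positivity
    rw [hl] at c1
    nlinarith
  have hlim : Real.exp (-l * t₀) * g t₀ x₀ ≤ 0 := by
    refine le_of_forall_pos_le_add fun η hη => ?_
    have hp : (0 : ℝ) < 1 + x₀ ^ 2 := by positivity
    have := key (η / (1 + x₀ ^ 2)) (by positivity)
    rw [div_mul_cancel₀ _ hp.ne'] at this
    linarith
  exact nonpos_of_mul_nonpos_right hlim (Real.exp_pos _)

/-! ### Parabolic inequality for the weighted Riemann invariants -/

/-- The pointwise identity behind the parabolic inequality for `g = σ m + ρ c - C₀ ρ`. Here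
`r, M, c` are the values of `ρ, m, ρ^θ`, subscripts are partial derivatives, and
`D = ρ^(θ-1) ρ_x²` is the dissipative term. -/
lemma euler_algebra {ε θ σ C r M c rt rx rxx Mt Mx Mxx D : ℝ} (hr : r ≠ 0) (hσ : σ ^ 2 = 1)
    (h1 : rt + Mx = ε * rxx)
    (h2 : Mt + (2 * M * Mx / r - M ^ 2 * rx / r ^ 2 + θ ^ 2 * c ^ 2 * rx) = ε * Mxx) :
    (σ * Mt + (1 + θ) * c * rt - C * rt)
      + (M / r + σ * θ * c) * (σ * Mx + (1 + θ) * c * rx - C * rx)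
      + ((Mx * r - M * rx) / r ^ 2 - σ * (θ * c * rx / r)) * (σ * M + r * c - C * r)
    = ε * (σ * Mxx + (1 + θ) * (θ * D + c * rxx) - C * rxx) - ε * (θ * (1 + θ) * D) := by
  have e1 : rt = ε * rxx - Mx := by linarith
  have e2 : Mt = ε * Mxx - (2 * M * Mx / r - M ^ 2 * rx / r ^ 2 + θ ^ 2 * c ^ 2 * rx) := by
    linarith
  rw [e1, e2]
  field_simp
  ring_nf
  simp only [hσ]
  ring

/-- Both slice functions of a `C²` function of two variables are differentiable, and the spatial
slice is twice differentiable. -/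
lemma slices_of_contDiff {f : ℝ → ℝ → ℝ} (hf : ContDiff ℝ 2 (fun q : ℝ × ℝ => f q.1 q.2)) :
    (∀ t x, HasDerivAt (fun s => f s x) (deriv (fun s => f s x) t) t) ∧
    (∀ t x, HasDerivAt (fun y => f t y) (deriv (fun y => f t y) x) x) ∧
    (∀ t x, HasDerivAt (deriv fun y => f t y) (deriv (deriv fun y => f t y) x) x) := by
  have ht : ∀ x, ContDiff ℝ 2 (fun s => f s x) := fun x =>
    hf.comp (contDiff_id.prodMk contDiff_const)
  have hx : ∀ t, ContDiff ℝ 2 (fun y => f t y) := fun t =>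
    hf.comp (contDiff_const.prodMk contDiff_id)
  refine ⟨fun t x => ?_, fun t x => ?_, fun t x => ?_⟩
  · exact ((ht x).differentiable (by norm_num) t).hasDerivAt
  · exact ((hx t).differentiable (by norm_num) x).hasDerivAt
  · have h : ContDiff ℝ (1 + 1) (fun y => f t y) := by
      rw [one_add_one_eq_two]; exact hx t
    exact (((contDiff_succ_iff_deriv.1 h).2.2).differentiable (by norm_num) x).hasDerivAt

/-- The bound `σ u + ρ^θ ≤ C₀` propagates in time, for either sign `σ = ±1`; `σ = 1` is the upper
bound on `u + ρ^θ` and `σ = -1` the lower bound on `u - ρ^θ`. -/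
lemma riemann_bound
    {γ κ θ ε T : ℝ} (hγ : 1 < γ) (hκ : κ = (γ - 1) ^ 2 / (4 * γ)) (hθ : θ = (γ - 1) / 2)
    (hε : 0 < ε) {ρ m : ℝ → ℝ → ℝ}
    (hregρ : ContDiff ℝ 2 (fun pt : ℝ × ℝ => ρ pt.1 pt.2))
    (hregm : ContDiff ℝ 2 (fun pt : ℝ × ℝ => m pt.1 pt.2))
    (hpos : ∀ t x : ℝ, t ∈ Set.Icc 0 T → 0 < ρ t x)
    (hpde₁ : ∀ t x : ℝ, t ∈ Set.Icc 0 T →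
      deriv (fun s => ρ s x) t + deriv (fun y => m t y) x
        = ε * deriv (deriv (fun y => ρ t y)) x)
    (hpde₂ : ∀ t x : ℝ, t ∈ Set.Icc 0 T →
      deriv (fun s => m s x) t
          + deriv (fun y => (m t y) ^ 2 / ρ t y + κ * ρ t y ^ γ) x
        = ε * deriv (deriv (fun y => m t y)) x)
    {M : ℝ} (hM : ∀ t x : ℝ, t ∈ Set.Icc 0 T →
      |ρ t x| ≤ M ∧ |m t x| ≤ M ∧ |m t x / ρ t x| ≤ M ∧ ρ t x ^ θ ≤ M ∧
      |deriv (fun y => m t y / ρ t y) x| ≤ M ∧ |deriv (fun y => ρ t y ^ θ) x| ≤ M)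
    {C₀ : ℝ} (hC₀ : 0 < C₀) {σ : ℝ} (hσ : |σ| = 1)
    (hinit : 0 ≤ T → ∀ x : ℝ, σ * (m 0 x / ρ 0 x) + ρ 0 x ^ θ ≤ C₀) :
    ∀ t x : ℝ, t ∈ Set.Icc 0 T → σ * (m t x / ρ t x) + ρ t x ^ θ ≤ C₀ := by
  intro t₁ x₁ ht₁
  have hT0 : 0 ≤ T := ht₁.1.trans ht₁.2
  have hθ0 : 0 < θ := by rw [hθ]; linarith
  have hσ2 : σ ^ 2 = 1 := by rw [← sq_abs, hσ]; norm_num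
  have hM0 : 0 ≤ M := (abs_nonneg _).trans (hM t₁ x₁ ht₁).1
  obtain ⟨hρt, hρx, hρxx⟩ := slices_of_contDiff hregρ
  obtain ⟨hmt, hmx, hmxx⟩ := slices_of_contDiff hregm
  have hfac : ∀ t x, t ∈ Icc 0 T → ρ t x ^ (1 + θ) = ρ t x * ρ t x ^ θ := fun t x h => by
    rw [Real.rpow_add (hpos t x h), Real.rpow_one]
  have hg : ∀ t x, t ∈ Icc 0 T → σ * m t x + ρ t x ^ (1 + θ) - C₀ * ρ t x
      = ρ t x * (σ * (m t x / ρ t x) + ρ t x ^ θ - C₀) := fun t x h => by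
    rw [hfac t x h]
    have := (hpos t x h).ne'
    field_simp
  have hux : ∀ t x, t ∈ Icc 0 T → deriv (fun y => m t y / ρ t y) x
      = (deriv (fun y => m t y) x * ρ t x - m t x * deriv (fun y => ρ t y) x) / ρ t x ^ 2 :=
    fun t x h => ((hmx t x).div (hρx t x) (hpos t x h).ne').deriv
  have hpw : ∀ (α t x : ℝ), t ∈ Icc 0 T → HasDerivAt (fun y => ρ t y ^ α)
      (deriv (fun y => ρ t y) x * α * ρ t x ^ (α - 1)) x :=
    fun α t x h => (hρx t x).rpow_const (Or.inl (hpos t x h).ne')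
  have hsub : ∀ t x, t ∈ Icc 0 T → ρ t x ^ (θ - 1) = ρ t x ^ θ / ρ t x := fun t x h =>
    Real.rpow_sub_one (hpos t x h).ne' θ
  have hflux : ∀ t x, t ∈ Icc 0 T →
      deriv (fun y => (m t y) ^ 2 / ρ t y + κ * ρ t y ^ γ) x
      = 2 * m t x * deriv (fun y => m t y) x / ρ t x
        - m t x ^ 2 * deriv (fun y => ρ t y) x / ρ t x ^ 2
        + θ ^ 2 * (ρ t x ^ θ) ^ 2 * deriv (fun y => ρ t y) x := by
    intro t x h
    have hr := (hpos t x h).ne'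
    have h1 := (((hmx t x).pow 2).div (hρx t x) hr).add ((hpw γ t x h).const_mul κ)
    have h2 : ρ t x ^ (γ - 1) = (ρ t x ^ θ) ^ 2 := by
      rw [← Real.rpow_mul_natCast (hpos t x h).le, hθ]
      congr 1; push_cast; ring
    have h3 : κ * γ = θ ^ 2 := by
      have : γ ≠ 0 := by linarith
      rw [hκ, hθ]; field_simp; ring
    refine Eq.trans h1.deriv ?_
    rw [h2, ← h3]
    simp only [Pi.pow_apply]
    field_simp
    push_cast
    ring
  have main := strip_maximum_principle (ε := ε) (T := T) (K := (2 + θ) * M)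
    (B := M + M * M) hε
    (fun t x => σ * m t x + ρ t x ^ (1 + θ) - C₀ * ρ t x)
    (fun t x => σ * deriv (fun s => m s x) t + (1 + θ) * ρ t x ^ θ * deriv (fun s => ρ s x) t
      - C₀ * deriv (fun s => ρ s x) t)
    (fun t x => σ * deriv (fun y => m t y) x + (1 + θ) * ρ t x ^ θ * deriv (fun y => ρ t y) x
      - C₀ * deriv (fun y => ρ t y) x)
    (fun t x => σ * deriv (deriv fun y => m t y) x
      + (1 + θ) * (θ * (ρ t x ^ (θ - 1) * deriv (fun y => ρ t y) x ^ 2)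
        + ρ t x ^ θ * deriv (deriv fun y => ρ t y) x)
      - C₀ * deriv (deriv fun y => ρ t y) x)
    (fun t x => m t x / ρ t x + σ * θ * ρ t x ^ θ)
    (fun t x => deriv (fun y => m t y / ρ t y) x - σ * deriv (fun y => ρ t y ^ θ) x)
    ?_ ?_ ?_ ?_ ?_ ?_ ?_ ?_ ?_ t₁ ht₁ x₁
  · have hp := hpos t₁ x₁ ht₁
    simp only [hg t₁ x₁ ht₁] at main
    have := nonpos_of_mul_nonpos_right main hp
    linarith
  · have h1 := hregρ.continuous
    have h2 := hregm.continuous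
    exact ((h2.const_mul σ).add (h1.rpow_const fun _ => Or.inr (by linarith))).sub
      (h1.const_mul C₀)
  · intro t h x
    have h1 := (hρt t x).rpow_const (p := 1 + θ) (Or.inl (hpos t x h).ne')
    refine ((((hmt t x).const_mul σ).add h1).sub ((hρt t x).const_mul C₀)).congr_deriv ?_
    rw [add_sub_cancel_left]; ring
  · intro t h x
    refine ((((hmx t x).const_mul σ).add (hpw (1 + θ) t x h)).sub
      ((hρx t x).const_mul C₀)).congr_deriv ?_
    rw [add_sub_cancel_left]; ring
  · intro t h x
    refine ((((hmxx t x).const_mul σ).add (((hpw θ t x h).const_mul (1 + θ)).mul (hρxx t x))).sub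
      ((hρxx t x).const_mul C₀)).congr_deriv ?_
    ring
  · intro t h x
    obtain ⟨-, -, h3, h4, -, -⟩ := hM t x h
    have hc := (Real.rpow_pos_of_pos (hpos t x h) θ).le
    calc |m t x / ρ t x + σ * θ * ρ t x ^ θ|
        ≤ |m t x / ρ t x| + |σ * θ * ρ t x ^ θ| := abs_add_le _ _
      _ = |m t x / ρ t x| + θ * ρ t x ^ θ := by
          rw [abs_mul, abs_mul, hσ, abs_of_pos hθ0, abs_of_nonneg hc, one_mul]
      _ ≤ (2 + θ) * M := by nlinarith
  · intro t h x
    obtain ⟨-, -, -, -, h5, h6⟩ := hM t x h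
    calc |deriv (fun y => m t y / ρ t y) x - σ * deriv (fun y => ρ t y ^ θ) x|
        ≤ |deriv (fun y => m t y / ρ t y) x| + |σ * deriv (fun y => ρ t y ^ θ) x| := abs_sub _ _
      _ = |deriv (fun y => m t y / ρ t y) x| + |deriv (fun y => ρ t y ^ θ) x| := by
          rw [abs_mul, hσ, one_mul]
      _ ≤ (2 + θ) * M := by nlinarith
  · intro t h x
    obtain ⟨h1, h2, -, h4, -, -⟩ := hM t x h
    have hp := hpos t x h
    have hc := (Real.rpow_pos_of_pos hp θ).le
    have e1 : σ * m t x ≤ M := by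
      refine (le_abs_self _).trans ?_
      rw [abs_mul, hσ, one_mul]; exact h2
    have e2 : ρ t x * ρ t x ^ θ ≤ M * M :=
      mul_le_mul ((le_abs_self _).trans h1) h4 hc hM0
    have e3 := mul_pos hC₀ hp
    simp only [hfac t x h]
    linarith
  · intro t h x
    have hp := hpos t x h
    have h1 := hpde₁ t x h
    have h2 := hpde₂ t x h
    rw [hflux t x h] at h2
    have alg := euler_algebra (C := C₀) (D := ρ t x ^ (θ - 1) * deriv (fun y => ρ t y) x ^ 2)
      hp.ne' hσ2 h1 h2
    have hcx : deriv (fun y => ρ t y ^ θ) x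
        = θ * ρ t x ^ θ * deriv (fun y => ρ t y) x / ρ t x := by
      rw [(hpw θ t x h).deriv, hsub t x h]; ring
    simp only [hux t x h, hcx, hfac t x h]
    rw [alg]
    have : 0 ≤ ε * (θ * (1 + θ) * (ρ t x ^ (θ - 1) * deriv (fun y => ρ t y) x ^ 2)) := by
      have := Real.rpow_pos_of_pos hp (θ - 1)
      positivity
    linarith
  · intro x
    have h : (0 : ℝ) ∈ Icc 0 T := ⟨le_rfl, hT0⟩
    simp only [hg 0 x h]
    exact mul_nonpos_of_nonneg_of_nonpos (hpos 0 x h).le (by linarith [hinit hT0 x])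

/-! ### The invariant region -/

/-- **Invariant region for the viscous homentropic Euler system.**
Let `p(ρ) = κ ρ^γ` with `γ > 1`, `κ = (γ−1)²/(4γ)`, `θ = (γ−1)/2`. If `(ρ, m)` is a
bounded positive classical solution of the viscous homentropic Euler system and the
Riemann invariants `u ± ρ^θ` initially lie in `[−C₀, C₀]`, then they remain there, and
consequently `0 < ρ ≤ C₀^(1/θ)` and `|m| ≤ C₀ ρ`. -/
theorem invariant_region_viscous_euler
    (γ : ℝ) (hγ : 1 < γ)
    (κ θ : ℝ) (hκ : κ = (γ - 1) ^ 2 / (4 * γ)) (hθ : θ = (γ - 1) / 2)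
    (ε : ℝ) (hε : 0 < ε) (T : ℝ) (hT : 0 < T)
    (ρ m : ℝ → ℝ → ℝ)
    (hregρ : ContDiff ℝ 2 (fun pt : ℝ × ℝ => ρ pt.1 pt.2))
    (hregm : ContDiff ℝ 2 (fun pt : ℝ × ℝ => m pt.1 pt.2))
    (hpos : ∀ t x : ℝ, t ∈ Set.Icc 0 T → 0 < ρ t x)
    -- PDE: `∂ₜ ρ + ∂ₓ m = ε ∂ₓₓ ρ`
    (hpde₁ : ∀ t x : ℝ, t ∈ Set.Icc 0 T →
      deriv (fun s => ρ s x) t + deriv (fun y => m t y) x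
        = ε * deriv (deriv (fun y => ρ t y)) x)
    -- PDE: `∂ₜ m + ∂ₓ (m²/ρ + κ ρ^γ) = ε ∂ₓₓ m`
    (hpde₂ : ∀ t x : ℝ, t ∈ Set.Icc 0 T →
      deriv (fun s => m s x) t
          + deriv (fun y => (m t y) ^ 2 / ρ t y + κ * ρ t y ^ γ) x
        = ε * deriv (deriv (fun y => m t y)) x)
    -- boundedness of `ρ`, `m`, `u = m/ρ`, `ρ^θ` and their first spatial derivatives
    (hbdd : ∃ M : ℝ, ∀ t x : ℝ, t ∈ Set.Icc 0 T →
      |ρ t x| ≤ M ∧ |m t x| ≤ M ∧ |m t x / ρ t x| ≤ M ∧ ρ t x ^ θ ≤ M ∧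
      |deriv (fun y => m t y / ρ t y) x| ≤ M ∧ |deriv (fun y => ρ t y ^ θ) x| ≤ M)
    (C₀ : ℝ) (hC₀ : 0 < C₀)
    -- Riemann invariants initially in `[−C₀, C₀]`
    (hinit : ∀ x : ℝ,
      m 0 x / ρ 0 x + ρ 0 x ^ θ ≤ C₀ ∧ -C₀ ≤ m 0 x / ρ 0 x - ρ 0 x ^ θ) :
    ∀ t x : ℝ, t ∈ Set.Icc 0 T →
      (m t x / ρ t x + ρ t x ^ θ ≤ C₀ ∧ -C₀ ≤ m t x / ρ t x - ρ t x ^ θ) ∧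
      ρ t x ≤ C₀ ^ (1 / θ) ∧ |m t x| ≤ C₀ * ρ t x := by
  obtain ⟨M, hM⟩ := hbdd
  intro t x ht
  have hup := riemann_bound hγ hκ hθ hε hregρ hregm hpos hpde₁ hpde₂ hM hC₀ (σ := 1) (by norm_num)
    (fun _ x => by linarith [(hinit x).1]) t x ht
  have hlo := riemann_bound hγ hκ hθ hε hregρ hregm hpos hpde₁ hpde₂ hM hC₀ (σ := -1) (by norm_num)
    (fun _ x => by linarith [(hinit x).2]) t x ht
  have hp := hpos t x ht
  have hθ0 : 0 < θ := by rw [hθ]; linarith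
  have hc := Real.rpow_pos_of_pos hp θ
  refine ⟨⟨by linarith, by linarith⟩, ?_, ?_⟩
  · rw [one_div, Real.le_rpow_inv_iff_of_pos hp.le hC₀.le hθ0]
    linarith
  · have hu : |m t x / ρ t x| ≤ C₀ := abs_le.2 ⟨by linarith, by linarith⟩
    rwa [abs_div, abs_of_pos hp, div_le_iff₀ hp] at hu
end

section
/- (Reduction of the Young measure for γ = 3.) Let H = {(ρ,u) ∈ ℝ² : ρ ≥ 0} and, for s ∈ ℝ, let χ_s : H → ℝ be the entropy kernel for γ = 3 given by χ_s(ρ,u) = 1 if |u − s| < ρ and χ_s(ρ,u) = 0 otherwise. Let ν be a compactly supported Borel probability measure on H satisfying the commutation relation ∫_H χ_{s₁} χ_{s₂} dν = (∫_H χ_{s₁} dν)(∫_H χ_{s₂} dν) for all s₁, s₂ ∈ ℝ. Then either ν({(ρ,u) : ρ > 0}) = 0 (ν is supported entirely in the vacuum set {ρ = 0}), or there exists a point (ρ̄, ū) with ρ̄ > 0 such that ν is the Dirac mass δ_{(ρ̄,ū)}. -/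
/-!
Taking `s₁ = s₂ = s` in the commutation relation and using `χ_s² = χ_s`, the number
`ν {|u - s| < ρ}` is idempotent, hence `0` or `1`. So for each `s` the event
`s ∈ (u - ρ, u + ρ)` is almost surely decided. Running over the countably many rational `s`,
almost every `(ρ, u)` has the same set of rational points in `(u - ρ, u + ρ)`. If `ρ > 0` has
positive measure, one such point `(ρ̄, ū)` has a nonempty interval; a nonempty open interval is
determined by its rational points, so almost every `(ρ, u)` equals `(ρ̄, ū)`.
-/

open MeasureTheory Set

/-- The weak entropy kernel for `γ = 3`: the indicator function of the set
`{(ρ,u) : |u − s| < ρ}`. -/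
noncomputable def entropyKernel3 (s : ℝ) (z : ℝ × ℝ) : ℝ :=
  if |z.2 - s| < z.1 then 1 else 0

/-- Zero-one law: each event `|u - s| < ρ` holds almost surely or fails almost surely. -/
lemma ae_or_ae_not_of_comm (ν : Measure (ℝ × ℝ)) [IsProbabilityMeasure ν] (s : ℝ)
    (h : (∫ z, entropyKernel3 s z * entropyKernel3 s z ∂ν)
        = (∫ z, entropyKernel3 s z ∂ν) * ∫ z, entropyKernel3 s z ∂ν) :
    (∀ᵐ z ∂ν, |z.2 - s| < z.1) ∨ ∀ᵐ z ∂ν, ¬ |z.2 - s| < z.1 := by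
  have hA : MeasurableSet {z : ℝ × ℝ | |z.2 - s| < z.1} :=
    (isOpen_lt (by fun_prop) (by fun_prop)).measurableSet
  have hsq : ∀ z, entropyKernel3 s z * entropyKernel3 s z = entropyKernel3 s z := by
    intro z
    unfold entropyKernel3
    split_ifs <;> simp
  have hint : ∫ z, entropyKernel3 s z ∂ν = ν.real {z : ℝ × ℝ | |z.2 - s| < z.1} := by
    rw [← integral_indicator_one hA]
    refine integral_congr_ae (.of_forall fun z => ?_)
    simp [entropyKernel3, indicator]
  simp only [hsq, hint] at h
  rcases eq_or_ne (ν.real {z : ℝ × ℝ | |z.2 - s| < z.1}) 0 with h0 | h0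
  · right
    rw [measureReal_eq_zero_iff] at h0
    exact measure_eq_zero_iff_ae_notMem.1 h0
  · left
    have h1 : ν.real {z : ℝ × ℝ | |z.2 - s| < z.1} = 1 :=
      mul_left_cancel₀ h0 (by rw [mul_one]; exact h.symm)
    refine (mem_ae_iff_prob_eq_one hA).2 ?_
    rwa [measureReal_def, ENNReal.toReal_eq_one_iff] at h1

/-- Inclusion between open intervals, the smaller one nonempty, can be tested on rationals. -/
lemma endpoints_le_of_rat {l r l' r' : ℝ} (hlr : l < r)
    (h : ∀ q : ℚ, l < q → (q : ℝ) < r → l' < q ∧ (q : ℝ) < r') : l' ≤ l ∧ r ≤ r' := by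
  constructor
  · by_contra! hlt
    obtain ⟨q, hq, hq'⟩ := exists_rat_btwn (lt_min hlr hlt)
    rw [lt_min_iff] at hq'
    exact lt_asymm hq'.2 (h q hq hq'.1).1
  · by_contra! hlt
    obtain ⟨q, hq, hq'⟩ := exists_rat_btwn (max_lt hlr hlt)
    rw [max_lt_iff] at hq
    exact lt_asymm hq.2 (h q hq.1 hq').2

/-- A point `(ρ, u)` with `ρ > 0` is determined by the rational points of `(u - ρ, u + ρ)`. -/
lemma eq_of_rat_iff {z w : ℝ × ℝ} (hw : 0 < w.1)
    (h : ∀ q : ℚ, |z.2 - q| < z.1 ↔ |w.2 - q| < w.1) : z = w := by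
  have key : ∀ (x : ℝ × ℝ) (q : ℚ),
      |x.2 - q| < x.1 ↔ x.2 - x.1 < q ∧ (q : ℝ) < x.2 + x.1 := by
    intro x q
    rw [abs_lt]
    constructor <;> rintro ⟨h1, h2⟩ <;> constructor <;> linarith
  simp only [key] at h
  obtain ⟨q, hq⟩ := exists_rat_btwn (show w.2 - w.1 < w.2 + w.1 by linarith)
  have hz := (h q).2 hq
  obtain ⟨h1, h2⟩ := endpoints_le_of_rat (hz.1.trans hz.2) fun q a b => (h q).1 ⟨a, b⟩
  obtain ⟨h3, h4⟩ := endpoints_le_of_rat (hq.1.trans hq.2) fun q a b => (h q).2 ⟨a, b⟩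
  ext <;> linarith

/-- **Reduction of the Young measure for `γ = 3`.**
A compactly supported Borel probability measure `ν` on the half-plane
`H = {(ρ,u) : ρ ≥ 0}` satisfying the commutation relation
`∫ χ_{s₁} χ_{s₂} dν = (∫ χ_{s₁} dν)(∫ χ_{s₂} dν)` for all `s₁, s₂` is either supported
entirely in the vacuum set `{ρ = 0}` or is a Dirac mass at some point with `ρ̄ > 0`. -/
theorem young_measure_reduction_gamma_three
    (ν : Measure (ℝ × ℝ)) [IsProbabilityMeasure ν]
    -- `ν` is supported in `H = {(ρ,u) : ρ ≥ 0}`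
    (hsupp : ν {z : ℝ × ℝ | z.1 < 0} = 0)
    -- `ν` has compact support
    (hcompact : ∃ K : Set (ℝ × ℝ), IsCompact K ∧ ν Kᶜ = 0)
    -- the commutation relation
    (hcomm : ∀ s₁ s₂ : ℝ,
      (∫ z, entropyKernel3 s₁ z * entropyKernel3 s₂ z ∂ν)
        = (∫ z, entropyKernel3 s₁ z ∂ν) * ∫ z, entropyKernel3 s₂ z ∂ν) :
    ν {z : ℝ × ℝ | 0 < z.1} = 0 ∨
      ∃ ρbar ubar : ℝ, 0 < ρbar ∧ ν = Measure.dirac (ρbar, ubar) := by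
  by_cases hvac : ν {z : ℝ × ℝ | 0 < z.1} = 0
  · exact Or.inl hvac
  right
  have hae : ∀ᵐ z : ℝ × ℝ ∂ν,
      ∀ q : ℚ, |z.2 - (q : ℝ)| < z.1 ↔ ∀ᵐ w : ℝ × ℝ ∂ν, |w.2 - (q : ℝ)| < w.1 := by
    rw [ae_all_iff]
    intro q
    rcases ae_or_ae_not_of_comm ν q (hcomm q q) with h | h
    · filter_upwards [h] with z hz
      exact iff_of_true hz h
    · filter_upwards [h] with z hz
      refine iff_of_false hz fun h' => ?_
      obtain ⟨w, hw, hw'⟩ := (h.and h').exists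
      exact hw hw'
  have hfreq : ∃ᵐ z ∂ν, 0 < z.1 := frequently_ae_iff.2 hvac
  obtain ⟨w, hwpos, hw⟩ := (hfreq.and_eventually hae).exists
  refine ⟨w.1, w.2, hwpos, ?_⟩
  have heq : (id : ℝ × ℝ → ℝ × ℝ) =ᵐ[ν] fun _ => w := by
    filter_upwards [hae] with z hz
    exact eq_of_rat_iff hwpos fun q => (hz q).trans (hw q).symm
  calc ν = ν.map id := Measure.map_id.symm
    _ = ν.map fun _ => w := Measure.map_congr heq
    _ = Measure.dirac (w.1, w.2) := by simp [Measure.map_const]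
end

section
/- (Fluid dynamics formalism for the isometric embedding of 2-dimensional metrics.) Let Ω ⊂ ℝ² be open, let K : Ω → ℝ and let Γ^{(k)}_{ij} : Ω → ℝ (i,j,k ∈ {1,2}) be given continuous functions (the Gauss curvature and Christoffel symbols of a given metric). Let ρ, u, v : Ω → ℝ be C¹ with ρ > 0, and define p = −1/ρ, q² = u² + v², L = ρv² + p, M = −ρuv, N = ρu² + p. Then: (a) at every point of Ω with q² + K > 0, the Gauss equation L N − M² = K holds if and only if the Bernoulli relation p = −√(q² + K) holds (equivalently ρ = (q² + K)^{−1/2}); and (b) the Codazzi equations ∂_x M − ∂_y L = L Γ^{(2)}_{22} − 2M Γ^{(2)}_{12} + N Γ^{(2)}_{11} and ∂_x N − ∂_y M = −L Γ^{(1)}_{22} + 2M Γ^{(1)}_{12} − N Γ^{(1)}_{11} hold on Ω if and only if (ρ, u, v) satisfies the momentum balance laws ∂_x(ρuv) + ∂_y(ρv² + p) = −(ρv² + p)Γ^{(2)}_{22} − 2ρuv Γ^{(2)}_{12} − (ρu² + p)Γ^{(2)}_{11} and ∂_x(ρu² + p) + ∂_y(ρuv) = −(ρv² + p)Γ^{(1)}_{22}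 − 2ρuv Γ^{(1)}_{12} − (ρu² + p)Γ^{(1)}_{11}. Consequently, (L, M, N) solves the Gauss–Codazzi system if and only if (ρ, u, v) solves the momentum system together with the Bernoulli relation. -/
/-!
Since `ρ p = -1`, the `ρ²u²v²` terms of `L N - M²` cancel and `L N - M² = p² - q²`. Hence the
Gauss equation says `p² = q² + K`, and because `p < 0` this is the Bernoulli relation
`p = -√(q² + K)` (`gauss_iff_bernoulli`). Both sides force `q² + K = 1 / ρ² > 0`, so the
equivalence is valid at every point of `Ω`, which gives the statement for the full system. The
Codazzi equations are the momentum laws rewritten with `M = -ρuv`, the first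
one multiplied by `-1`, using `∂(-f) = -∂f`.
-/

open Set

/-- Partial derivative in the first (`x`) coordinate of a function on `ℝ²`. -/
noncomputable def pdx (f : ℝ × ℝ → ℝ) (z : ℝ × ℝ) : ℝ := fderiv ℝ f z (1, 0)

/-- Partial derivative in the second (`y`) coordinate of a function on `ℝ²`. -/
noncomputable def pdy (f : ℝ × ℝ → ℝ) (z : ℝ × ℝ) : ℝ := fderiv ℝ f z (0, 1)

theorem pdx_neg (f : ℝ × ℝ → ℝ) (z : ℝ × ℝ) : pdx (fun w => -f w) z = -pdx f z := by
  simp [pdx, fderiv_fun_neg]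

theorem pdy_neg (f : ℝ × ℝ → ℝ) (z : ℝ × ℝ) : pdy (fun w => -f w) z = -pdy f z := by
  simp [pdy, fderiv_fun_neg]

/-- Pointwise equivalence of the Gauss equation and the Bernoulli relation. If `q² + K ≤ 0` both
sides are false: the first gives `q² + K = 1 / ρ²`, and in the second the square root is `0`. -/
theorem gauss_iff_bernoulli {r a b k : ℝ} (hr : 0 < r) :
    (r * b ^ 2 + -(1 / r)) * (r * a ^ 2 + -(1 / r)) - (-(r * a * b)) ^ 2 = k ↔
      -(1 / r) = -Real.sqrt (a ^ 2 + b ^ 2 + k) := by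
  have key : (r * b ^ 2 + -(1 / r)) * (r * a ^ 2 + -(1 / r)) - (-(r * a * b)) ^ 2
      = (1 / r) ^ 2 - (a ^ 2 + b ^ 2) := by
    field_simp
    ring
  have hp : 0 < 1 / r := by positivity
  rw [key, neg_inj, eq_comm (a := 1 / r), Real.sqrt_eq_iff_mul_self_eq_of_pos hp, ← sq]
  constructor <;> intro h <;> linarith

/-- **Fluid dynamics formalism for the isometric embedding of 2-dimensional metrics
(Chen–Slemrod–Wang).** With the Chaplygin-type pressure `p = −1/ρ` and
`L = ρv² + p`, `M = −ρuv`, `N = ρu² + p`, `q² = u² + v²`: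
(a) where `q² + K > 0`, the Gauss equation `LN − M² = K` is equivalent to the Bernoulli
relation `p = −√(q² + K)`;
(b) the Codazzi equations hold on `Ω` iff the momentum balance laws hold on `Ω`;
(c) consequently `(L,M,N)` solves the Gauss–Codazzi system iff `(ρ,u,v)` solves the
momentum system together with the Bernoulli relation. -/
theorem fluid_formalism_isometric_embedding
    (Ω : Set (ℝ × ℝ)) (hΩ : IsOpen Ω)
    -- the given Gauss curvature and Christoffel symbols (continuous functions)
    (K Γ1_11 Γ1_12 Γ1_22 Γ2_11 Γ2_12 Γ2_22 : ℝ × ℝ → ℝ)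
    (hK : ContinuousOn K Ω)
    (hΓ : ContinuousOn Γ1_11 Ω ∧ ContinuousOn Γ1_12 Ω ∧ ContinuousOn Γ1_22 Ω ∧
      ContinuousOn Γ2_11 Ω ∧ ContinuousOn Γ2_12 Ω ∧ ContinuousOn Γ2_22 Ω)
    -- the fluid variables
    (ρ u v : ℝ × ℝ → ℝ)
    (hρ : ContDiffOn ℝ 1 ρ Ω) (hu : ContDiffOn ℝ 1 u Ω) (hv : ContDiffOn ℝ 1 v Ω)
    (hρpos : ∀ z ∈ Ω, 0 < ρ z)
    -- abbreviations: `p = −1/ρ`, `q² = u² + v²`, `L = ρv² + p`, `M = −ρuv`, `N = ρu² + p`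
    (P q2 L M N : ℝ × ℝ → ℝ)
    (hP : P = fun z => -(1 / ρ z))
    (hq2 : q2 = fun z => (u z) ^ 2 + (v z) ^ 2)
    (hL : L = fun z => ρ z * (v z) ^ 2 + P z)
    (hM : M = fun z => -(ρ z * u z * v z))
    (hN : N = fun z => ρ z * (u z) ^ 2 + P z) :
    -- (a) Gauss equation ↔ Bernoulli relation, where `q² + K > 0`
    (∀ z ∈ Ω, 0 < q2 z + K z →
      (L z * N z - (M z) ^ 2 = K z ↔ P z = -Real.sqrt (q2 z + K z))) ∧
    -- (b) the Codazzi equations ↔ the momentum balance laws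
    ((∀ z ∈ Ω,
        pdx M z - pdy L z
          = L z * Γ2_22 z - 2 * M z * Γ2_12 z + N z * Γ2_11 z ∧
        pdx N z - pdy M z
          = -(L z) * Γ1_22 z + 2 * M z * Γ1_12 z - N z * Γ1_11 z)
      ↔
      (∀ z ∈ Ω,
        pdx (fun w => ρ w * u w * v w) z + pdy (fun w => ρ w * (v w) ^ 2 + P w) z
          = -(ρ z * (v z) ^ 2 + P z) * Γ2_22 z - 2 * (ρ z * u z * v z) * Γ2_12 z
            - (ρ z * (u z) ^ 2 + P z) * Γ2_11 z ∧
        pdx (fun w => ρ w * (u w) ^ 2 + P w) z + pdy (fun w => ρ w * u w * v w) z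
          = -(ρ z * (v z) ^ 2 + P z) * Γ1_22 z - 2 * (ρ z * u z * v z) * Γ1_12 z
            - (ρ z * (u z) ^ 2 + P z) * Γ1_11 z)) ∧
    -- (c) the full Gauss–Codazzi system ↔ momentum system + Bernoulli relation
    ((∀ z ∈ Ω,
        L z * N z - (M z) ^ 2 = K z ∧
        pdx M z - pdy L z
          = L z * Γ2_22 z - 2 * M z * Γ2_12 z + N z * Γ2_11 z ∧
        pdx N z - pdy M z
          = -(L z) * Γ1_22 z + 2 * M z * Γ1_12 z - N z * Γ1_11 z)
      ↔
      (∀ z ∈ Ω,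
        P z = -Real.sqrt (q2 z + K z) ∧
        pdx (fun w => ρ w * u w * v w) z + pdy (fun w => ρ w * (v w) ^ 2 + P w) z
          = -(ρ z * (v z) ^ 2 + P z) * Γ2_22 z - 2 * (ρ z * u z * v z) * Γ2_12 z
            - (ρ z * (u z) ^ 2 + P z) * Γ2_11 z ∧
        pdx (fun w => ρ w * (u w) ^ 2 + P w) z + pdy (fun w => ρ w * u w * v w) z
          = -(ρ z * (v z) ^ 2 + P z) * Γ1_22 z - 2 * (ρ z * u z * v z) * Γ1_12 z
            - (ρ z * (u z) ^ 2 + P z) * Γ1_11 z)) := by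
  subst hL hM hN hP hq2
  simp only [pdx_neg, pdy_neg]
  refine ⟨fun z hz _ => gauss_iff_bernoulli (hρpos z hz),
    forall₂_congr fun z _ => and_congr ?_ ?_,
    forall₂_congr fun z hz => and_congr (gauss_iff_bernoulli (hρpos z hz)) (and_congr ?_ ?_)⟩
  all_goals constructor <;> intro h <;> linarith
end
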